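/- arXiv:1707.02314 — 3 statements merged into one kernel-verified Lean document; each statement's English description precedes it below -/
import Mathlib

section
/- Let a ∈ ℝ, let I_f be an interval with least element a, nonempty interior, and I_f ⊂ [a,∞), let Ω = ℝ^m, let α = (α₁,…,α_m) ∈ (0,1]^m, let q_a ∈ ℝ^m, and let f : ℝ^m × I_f → ℝ^m be a Carathéodory function that is bounded on compacts and globally Lipschitz continuous in its first variable: for every compact subinterval [c,d] ⊂ I_f there exists L ≥ 0 with |f(x₂,t) − f(x₁,t)| ≤ L|x₂ − x₁| for all x₁, x₂ ∈ ℝ^m and almost every t ∈ [c,d]. Then the maximal solution (q,I) of the Caputo Cauchy problem ( _cD^{α_i}_{a+}[q_i] = f_i(q(·),·) a.e., q(a) = q_a ) is global, that is, I = I_f. -/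
open MeasureTheory Set

/-- Left Riemann–Liouville fractional integral of order `α` with base point `a`
(for `α = 0` it is the identity). -/
noncomputable def rlInt (a α : ℝ) (q : ℝ → ℝ) (t : ℝ) : ℝ :=
  if α = 0 then q t else (1 / Real.Gamma α) * ∫ τ in a..t, (t - τ) ^ (α - 1) * q τ

/-- `I` is an interval with least element `a`, nonempty interior, and `I ⊆ [a,∞)`. -/
def IsIntervalFrom (a : ℝ) (I : Set ℝ) : Prop :=
  a ∈ I ∧ I ⊆ Set.Ici a ∧ (interior I).Nonempty ∧ I.OrdConnected

/-- `(q, I)` is a local solution of the Caputo Cauchy problem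
`_cD^{α_i}_{a+}[q_i] = F_i(q(·),·)` a.e., `q(a) = qa`, on the domain `Ω`:
`I ⊆ If` is an interval with least element `a` and nonempty interior, `q` is continuous
on `I` with values in `Ω` and `q(a) = qa`, and for each `i` the function
`I^{1-α_i}_{a+}[q_i - (qa)_i]` agrees a.e. on `I` with a locally absolutely continuous
function `t ↦ c + ∫_a^t h` whose derivative `h` (the Caputo fractional derivative of
`q_i`) equals `F_i(q(t), t)` for almost every `t ∈ I`. -/
def IsCaputoLocalSol (a : ℝ) (If : Set ℝ) {m : ℕ}
    (Ω : Set (EuclideanSpace ℝ (Fin m))) (α : Fin m → ℝ)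
    (qa : EuclideanSpace ℝ (Fin m))
    (F : EuclideanSpace ℝ (Fin m) → ℝ → EuclideanSpace ℝ (Fin m))
    (q : ℝ → EuclideanSpace ℝ (Fin m)) (I : Set ℝ) : Prop :=
  IsIntervalFrom a I ∧ I ⊆ If ∧ ContinuousOn q I ∧ (∀ t ∈ I, q t ∈ Ω) ∧ q a = qa ∧
  ∀ i, ∃ c : ℝ, ∃ h : ℝ → ℝ,
    (∀ b ∈ I, MeasureTheory.IntegrableOn h (Set.Icc a b)) ∧
    (∀ᵐ t ∂(MeasureTheory.volume.restrict I),
      rlInt a (1 - α i) (fun τ => q τ i - qa i) t = c + ∫ τ in a..t, h τ) ∧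
    (∀ᵐ t ∂(MeasureTheory.volume.restrict I), h t = F (q t) t i)

/-- `(q, I)` is a maximal local solution of the Caputo Cauchy problem:
every extension `(q', I')` of it satisfies `I' = I`. -/
def IsMaximalSol (a : ℝ) (If : Set ℝ) {m : ℕ}
    (Ω : Set (EuclideanSpace ℝ (Fin m))) (α : Fin m → ℝ)
    (qa : EuclideanSpace ℝ (Fin m))
    (F : EuclideanSpace ℝ (Fin m) → ℝ → EuclideanSpace ℝ (Fin m))
    (q : ℝ → EuclideanSpace ℝ (Fin m)) (I : Set ℝ) : Prop :=
  IsCaputoLocalSol a If Ω α qa F q I ∧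
  ∀ (q' : ℝ → EuclideanSpace ℝ (Fin m)) (I' : Set ℝ),
    IsCaputoLocalSol a If Ω α qa F q' I' → I ⊆ I' → Set.EqOn q' q I → I' = I


def BW (a d M : ℝ) (w : ℝ → ℝ) : Prop :=
  AEStronglyMeasurable w (volume.restrict (Ioc a d)) ∧
    ∀ᵐ τ ∂(volume.restrict (Ioc a d)), |w τ| ≤ M

lemma BW.mono {a d M : ℝ} {w : ℝ → ℝ} (h : BW a d M w) {x y : ℝ} (hx : a ≤ x) (hy : y ≤ d) :
    BW x y M w := by
  have hs : Ioc x y ⊆ Ioc a d := Ioc_subset_Ioc hx hy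
  exact ⟨h.1.mono_measure (Measure.restrict_mono hs le_rfl),
    ae_restrict_of_ae_restrict_of_subset hs h.2⟩

lemma kern_ii {α : ℝ} (hα : 0 < α) (t x y : ℝ) :
    IntervalIntegrable (fun τ => (t - τ) ^ (α - 1)) volume x y := by
  have := (intervalIntegral.intervalIntegrable_rpow' (a := t - x) (b := t - y)
    (r := α - 1) (by linarith)).comp_sub_left t
  simpa using this

lemma kern_mul_ii {a d M : ℝ} {w : ℝ → ℝ} (h : BW a d M w) (had : a ≤ d)
    {α : ℝ} (hα : 0 < α) (t : ℝ) :
    IntervalIntegrable (fun τ => (t - τ) ^ (α - 1) * w τ) volume a d := by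
  rw [intervalIntegrable_iff_integrableOn_Ioc_of_le had]
  have h1 := kern_ii hα t a d
  rw [intervalIntegrable_iff_integrableOn_Ioc_of_le had] at h1
  exact Integrable.mul_bdd (c := M) h1 h.1 (by simpa using h.2)

lemma BW.intervalIntegrable {a d M : ℝ} {w : ℝ → ℝ} (h : BW a d M w) (had : a ≤ d) :
    IntervalIntegrable w volume a d := by
  have := kern_mul_ii h had one_pos a
  simpa using this

lemma BW.sub {a d M N : ℝ} {w v : ℝ → ℝ} (h : BW a d M w) (h' : BW a d N v) :
    BW a d (M + N) (fun τ => w τ - v τ) := by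
  refine ⟨h.1.sub h'.1, ?_⟩
  filter_upwards [h.2, h'.2] with τ h1 h2
  exact (abs_sub _ _).trans (add_le_add h1 h2)

lemma rlInt_sub {a d M N : ℝ} {w v : ℝ → ℝ} (h : BW a d M w) (h' : BW a d N v) {α : ℝ}
    (hα : 0 ≤ α) {t : ℝ} (ht : t ∈ Icc a d) :
    rlInt a α (fun τ => w τ - v τ) t = rlInt a α w t - rlInt a α v t := by
  unfold rlInt
  split_ifs with h0
  · rfl
  have hα' : 0 < α := lt_of_le_of_ne hα (Ne.symm h0)
  rw [← mul_sub, ← intervalIntegral.integral_sub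
    (kern_mul_ii (h.mono le_rfl ht.2) ht.1 hα' t) (kern_mul_ii (h'.mono le_rfl ht.2) ht.1 hα' t)]
  simp only [mul_sub]

lemma rlInt_congr {a t : ℝ} {w v : ℝ → ℝ} (hat : a ≤ t) {α : ℝ} (hα : 0 < α)
    (h : ∀ᵐ τ ∂(volume.restrict (Ioc a t)), w τ = v τ) : rlInt a α w t = rlInt a α v t := by
  unfold rlInt
  rw [if_neg hα.ne', if_neg hα.ne']
  congr 1
  rw [intervalIntegral.integral_of_le hat, intervalIntegral.integral_of_le hat]
  apply integral_congr_ae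
  filter_upwards [h] with τ hτ
  rw [hτ]

lemma kern_int {α : ℝ} (hα : 0 < α) (t x y : ℝ) :
    ∫ τ in x..y, (t - τ) ^ (α - 1) = ((t - x) ^ α - (t - y) ^ α) / α := by
  rw [intervalIntegral.integral_comp_sub_left (fun u => u ^ (α - 1)) t,
    integral_rpow (Or.inl (by linarith))]
  simp

lemma rlInt_holder {a d M : ℝ} {w : ℝ → ℝ} (h : BW a d M w) (hM : 0 ≤ M) {α : ℝ} (hα : 0 < α)
    (hα1 : α ≤ 1) {s t : ℝ} (has : a ≤ s) (hst : s ≤ t) (htd : t ≤ d) :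
    |rlInt a α w t - rlInt a α w s| ≤ 1 / Real.Gamma α * (M * (2 * (t - s) ^ α / α)) := by
  have hG := Real.Gamma_pos_of_pos hα
  unfold rlInt
  rw [if_neg hα.ne', if_neg hα.ne', ← mul_sub, abs_mul, abs_of_pos (by positivity)]
  gcongr
  have hs1 : BW a s M w := h.mono le_rfl (hst.trans htd)
  have hs2 : BW s t M w := h.mono has htd
  have i1 := kern_mul_ii hs1 has hα t
  have i2 := kern_mul_ii hs2 hst hα t
  have i3 := kern_mul_ii hs1 has hα s
  rw [← intervalIntegral.integral_add_adjacent_intervals i1 i2]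
  have e1 : |∫ τ in s..t, (t - τ) ^ (α - 1) * w τ| ≤ M * ((t - s) ^ α / α) := by
    have : ∫ τ in s..t, M * (t - τ) ^ (α - 1) = M * ((t - s) ^ α / α) := by
      rw [intervalIntegral.integral_const_mul, kern_int hα]
      simp [Real.zero_rpow hα.ne']
    rw [← this, ← Real.norm_eq_abs]
    apply intervalIntegral.norm_integral_le_of_norm_le hst _ ((kern_ii hα t s t).const_mul M)
    have := hs2.2
    rw [ae_restrict_iff' measurableSet_Ioc] at this
    filter_upwards [this] with τ h1 h2
    have := h1 h2
    have h3 : 0 ≤ (t - τ) ^ (α - 1) := Real.rpow_nonneg (by linarith [h2.2]) _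
    rw [Real.norm_eq_abs, abs_mul, abs_of_nonneg h3, mul_comm]
    gcongr
  have e2 : |(∫ τ in a..s, (t - τ) ^ (α - 1) * w τ) - ∫ τ in a..s, (s - τ) ^ (α - 1) * w τ|
      ≤ M * ((t - s) ^ α / α) := by
    rw [← intervalIntegral.integral_sub i1 i3]
    have key : ∫ τ in a..s, M * ((s - τ) ^ (α - 1) - (t - τ) ^ (α - 1)) ≤
        M * ((t - s) ^ α / α) := by
      rw [intervalIntegral.integral_const_mul,
        intervalIntegral.integral_sub (kern_ii hα s a s) (kern_ii hα t a s),
        kern_int hα, kern_int hα, ← sub_div]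
      gcongr
      rw [sub_self, Real.zero_rpow hα.ne']
      have : (s - a) ^ α ≤ (t - a) ^ α :=
        Real.rpow_le_rpow (by linarith) (by linarith) hα.le
      linarith
    refine le_trans ?_ key
    rw [← Real.norm_eq_abs]
    apply intervalIntegral.norm_integral_le_of_norm_le has _
      (((kern_ii hα s a s).sub (kern_ii hα t a s)).const_mul M)
    have := hs1.2
    rw [ae_restrict_iff' measurableSet_Ioc] at this
    have hne : ∀ᵐ τ : ℝ, τ ≠ s := by
      simp [ae_iff, measure_singleton]
    filter_upwards [this, hne] with τ h1 h4 h2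
    have := h1 h2
    have hlt : τ < s := lt_of_le_of_ne h2.2 h4
    have h3 : (t - τ) ^ (α - 1) ≤ (s - τ) ^ (α - 1) :=
      Real.rpow_le_rpow_of_nonpos (by linarith) (by linarith) (by linarith)
    rw [Real.norm_eq_abs, ← sub_mul, abs_mul, abs_sub_comm, abs_of_nonneg (by linarith), mul_comm]
    gcongr
  have := abs_add_le ((∫ τ in a..s, (t - τ) ^ (α - 1) * w τ) - ∫ τ in a..s, (s - τ) ^ (α - 1) * w τ)
    (∫ τ in s..t, (t - τ) ^ (α - 1) * w τ)
  rw [show ∀ x y z : ℝ, x + y - z = (x - z) + y by intros; ring]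
  calc _ ≤ _ := this
    _ ≤ _ := add_le_add e2 e1
    _ = _ := by ring

lemma rlInt_cont {a d M : ℝ} {w : ℝ → ℝ} (h : BW a d M w) (hM : 0 ≤ M) {α : ℝ} (hα : 0 < α)
    (hα1 : α ≤ 1) : ContinuousOn (rlInt a α w) (Icc a d) := by
  intro s hs
  rw [ContinuousWithinAt, tendsto_iff_dist_tendsto_zero]
  have hb : ∀ t ∈ Icc a d, dist (rlInt a α w t) (rlInt a α w s) ≤
      1 / Real.Gamma α * (M * (2 * |t - s| ^ α / α)) := by
    intro t ht
    rw [Real.dist_eq]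
    rcases le_total s t with hst | hst
    · rw [abs_of_nonneg (sub_nonneg.2 hst)]
      exact rlInt_holder h hM hα hα1 hs.1 hst ht.2
    · rw [abs_sub_comm, abs_sub_comm t s, abs_of_nonneg (sub_nonneg.2 hst)]
      exact rlInt_holder h hM hα hα1 ht.1 hst hs.2
  have hc : Filter.Tendsto (fun t => 1 / Real.Gamma α * (M * (2 * |t - s| ^ α / α)))
      (nhdsWithin s (Icc a d)) (nhds 0) := by
    have : Continuous (fun t : ℝ => 1 / Real.Gamma α * (M * (2 * |t - s| ^ α / α))) := by
      have : Continuous fun t : ℝ => |t - s| ^ α :=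
        (by fun_prop : Continuous fun t : ℝ => |t - s|).rpow_const (fun _ => Or.inr hα.le)
      fun_prop
    have h2 := (this.tendsto s).mono_left (nhdsWithin_le_nhds (s := Icc a d))
    simpa [Real.zero_rpow hα.ne'] using h2
  refine squeeze_zero' (Filter.Eventually.of_forall fun _ => dist_nonneg) ?_ hc
  filter_upwards [self_mem_nhdsWithin] with t ht using hb t ht

lemma exp_bound {α lam : ℝ} (hα : 0 < α) (hl : 0 < lam) {a t : ℝ} (hat : a ≤ t) :
    ∫ τ in a..t, (t - τ) ^ (α - 1) * Real.exp (lam * (τ - a)) ≤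
      (1 / lam) ^ α * Real.Gamma α * Real.exp (lam * (t - a)) := by
  have h1 : ∫ τ in a..t, (t - τ) ^ (α - 1) * Real.exp (lam * (τ - a)) =
      (∫ x in (0:ℝ)..(t - a), x ^ (α - 1) * Real.exp (-(lam * x))) * Real.exp (lam * (t - a)) := by
    rw [← intervalIntegral.integral_mul_const]
    have := intervalIntegral.integral_comp_sub_left (a := a) (b := t)
      (fun x => x ^ (α - 1) * Real.exp (-(lam * x)) * Real.exp (lam * (t - a))) t
    rw [sub_self] at this
    rw [← this]
    apply intervalIntegral.integral_congr
    intro τ _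
    simp only
    rw [mul_assoc, ← Real.exp_add]
    congr 2
    ring
  rw [h1]
  gcongr
  rw [← Real.integral_rpow_mul_exp_neg_mul_Ioi hα hl,
    intervalIntegral.integral_of_le (by linarith)]
  apply setIntegral_mono_set
  · have := integrableOn_rpow_mul_exp_neg_mul_rpow (p := 1) (s := α - 1) (b := lam)
      (by linarith) one_pos hl
    simpa using this
  · filter_upwards [self_mem_ae_restrict measurableSet_Ioi] with x hx
    have : (0:ℝ) < x := hx
    simp only [Pi.zero_apply]
    positivity
  · exact Ioc_subset_Ioi_self.eventuallyLE

lemma rlInt_gronwall {a t M N C lam : ℝ} {w v : ℝ → ℝ} (h : BW a t M w) (h' : BW a t N v)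
    (hat : a ≤ t) {α : ℝ} (hα : 0 < α) (hl : 0 < lam) (hC : 0 ≤ C)
    (hd : ∀ᵐ τ ∂(volume.restrict (Ioc a t)), |w τ - v τ| ≤ C * Real.exp (lam * (τ - a))) :
    |rlInt a α w t - rlInt a α v t| ≤ C * (1 / lam) ^ α * Real.exp (lam * (t - a)) := by
  have hG := Real.Gamma_pos_of_pos hα
  rw [← rlInt_sub h h' hα.le (right_mem_Icc.2 hat), rlInt, if_neg hα.ne', abs_mul,
    abs_of_pos (by positivity)]
  have hi : IntervalIntegrable (fun τ => (t - τ) ^ (α - 1) * Real.exp (lam * (τ - a))) volume a t :=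
    (kern_ii hα t a t).mul_continuousOn (by fun_prop)
  have h1 : |∫ τ in a..t, (t - τ) ^ (α - 1) * (w τ - v τ)| ≤
      ∫ τ in a..t, C * ((t - τ) ^ (α - 1) * Real.exp (lam * (τ - a))) := by
    rw [← Real.norm_eq_abs]
    apply intervalIntegral.norm_integral_le_of_norm_le hat _ (hi.const_mul C)
    rw [ae_restrict_iff' measurableSet_Ioc] at hd
    filter_upwards [hd] with τ h1 h2
    have := h1 h2
    have h3 : 0 ≤ (t - τ) ^ (α - 1) := Real.rpow_nonneg (by linarith [h2.2]) _
    rw [Real.norm_eq_abs, abs_mul, abs_of_nonneg h3]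
    calc _ ≤ (t - τ) ^ (α - 1) * (C * Real.exp (lam * (τ - a))) := by gcongr
      _ = _ := by ring
  rw [intervalIntegral.integral_const_mul] at h1
  calc _ ≤ 1 / Real.Gamma α * (C * ((1 / lam) ^ α * Real.Gamma α * Real.exp (lam * (t - a)))) := by
        gcongr
        exact h1.trans (by gcongr; exact exp_bound hα hl hat)
    _ = _ := by field_simp

lemma beta_int {α : ℝ} (hα : 0 < α) (hα1 : α < 1) {τ t : ℝ} (h : τ < t) :
    ∫ s in τ..t, (t - s) ^ (1 - α - 1) * (s - τ) ^ (α - 1) =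
      Real.Gamma α * Real.Gamma (1 - α) := by
  have hs := Complex.betaIntegral_scaled (α : ℂ) ((1 - α : ℝ) : ℂ) (sub_pos.2 h)
  have hG := Complex.Gamma_mul_Gamma_eq_betaIntegral (s := (α : ℂ)) (t := ((1 - α : ℝ) : ℂ))
    (by simpa using hα) (by simpa using hα1)
  have e : (α : ℂ) + ((1 - α : ℝ) : ℂ) = 1 := by push_cast; ring
  rw [e, Complex.Gamma_one, one_mul] at hG
  rw [e, sub_self, Complex.cpow_zero, one_mul, ← hG, Complex.Gamma_ofReal, Complex.Gamma_ofReal]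
    at hs
  have h2 : ∫ s in τ..t, (t - s) ^ (1 - α - 1) * (s - τ) ^ (α - 1) =
      ∫ x in (0:ℝ)..(t - τ), x ^ (α - 1) * (t - τ - x) ^ (1 - α - 1) := by
    have := intervalIntegral.integral_comp_sub_right (a := τ) (b := t)
      (fun x => x ^ (α - 1) * (t - τ - x) ^ (1 - α - 1)) τ
    rw [sub_self] at this
    rw [← this]
    apply intervalIntegral.integral_congr
    intro x _
    simp only
    rw [mul_comm]
    congr 2
    ring
  rw [h2]
  apply Complex.ofReal_injective
  rw [Complex.ofReal_mul, ← hs, ← intervalIntegral.integral_ofReal]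
  apply intervalIntegral.integral_congr
  intro x hx
  rw [uIcc_of_le (by linarith)] at hx
  simp only
  rw [Complex.ofReal_mul, Complex.ofReal_cpow hx.1, Complex.ofReal_cpow (by linarith [hx.2])]
  push_cast
  rfl

lemma beta_ii {α : ℝ} (hα : 0 < α) (hα1 : α < 1) {τ t : ℝ} (h : τ < t) :
    IntervalIntegrable (fun s => (t - s) ^ (1 - α - 1) * (s - τ) ^ (α - 1)) volume τ t := by
  by_contra hc
  have := intervalIntegral.integral_undef hc
  rw [beta_int hα hα1 h] at this
  have h1 := Real.Gamma_pos_of_pos hα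
  have h2 := Real.Gamma_pos_of_pos (sub_pos.2 hα1)
  exact (mul_pos h1 h2).ne' this

lemma rlInt_inv {a t : ℝ} {w : ℝ → ℝ} (hat : a ≤ t) (hw : IntervalIntegrable w volume a t)
    {α : ℝ} (hα : 0 < α) (hα1 : α < 1) :
    rlInt a (1 - α) (rlInt a α w) t = ∫ τ in a..t, w τ := by
  have hG1 := Real.Gamma_pos_of_pos hα
  have hG2 := Real.Gamma_pos_of_pos (sub_pos.2 hα1)
  have hαn : (1 - α) ≠ 0 := (sub_pos.2 hα1).ne'
  rw [intervalIntegrable_iff_integrableOn_Ioc_of_le hat] at hw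
  set μ := volume.restrict (Ioc a t) with hμ
  let K : ℝ → ℝ → ℝ := fun s τ => (Ioi τ).indicator
    (fun s => (t - s) ^ (1 - α - 1) * (s - τ) ^ (α - 1)) s
  have hKeq : ∀ s τ, K s τ =
      if τ < s then (t - s) ^ (1 - α - 1) * (s - τ) ^ (α - 1) else 0 := by
    intro s τ
    simp [K, indicator_apply]
  have hKm : Measurable (Function.uncurry K) := by
    have : Function.uncurry K = fun p : ℝ × ℝ =>
      if p.2 < p.1 then (t - p.1) ^ (1 - α - 1) * (p.1 - p.2) ^ (α - 1) else 0 := by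
      ext p
      exact hKeq _ _
    rw [this]
    exact Measurable.ite (measurableSet_lt measurable_snd measurable_fst) (by fun_prop) (by fun_prop)
  have hlt : ∀ᵐ τ ∂μ, a < τ ∧ τ < t := by
    rw [hμ, ae_restrict_iff' measurableSet_Ioc]
    have hne : ∀ᵐ τ : ℝ, τ ≠ t := by simp [ae_iff, measure_singleton]
    filter_upwards [hne] with τ h1 h2 using ⟨h2.1, lt_of_le_of_ne h2.2 h1⟩
  have hset : ∀ τ, a < τ → Ioc a t ∩ Ioi τ = Ioc τ t := by
    intro τ h
    ext x
    simp only [mem_inter_iff, mem_Ioc, mem_Ioi]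
    constructor
    · rintro ⟨⟨_, h2⟩, h3⟩; exact ⟨h3, h2⟩
    · rintro ⟨h1, h2⟩; exact ⟨⟨h.trans h1, h2⟩, h1⟩
  have hKint : ∀ τ, a < τ → τ < t → Integrable (fun s => K s τ) μ := by
    intro τ h1 h2
    simp only [K]
    rw [integrable_indicator_iff measurableSet_Ioi, IntegrableOn, hμ,
      Measure.restrict_restrict measurableSet_Ioi, inter_comm, hset τ h1]
    have := beta_ii hα hα1 h2
    rwa [intervalIntegrable_iff_integrableOn_Ioc_of_le h2.le] at this
  have hKval : ∀ τ, a < τ → τ < t → ∫ s, K s τ ∂μ = Real.Gamma α * Real.Gamma (1 - α) := by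
    intro τ h1 h2
    simp only [K]
    rw [integral_indicator measurableSet_Ioi, hμ,
      Measure.restrict_restrict measurableSet_Ioi, inter_comm, hset τ h1, ← beta_int hα hα1 h2,
      intervalIntegral.integral_of_le h2.le]
  have hKnn : ∀ᵐ s ∂μ, ∀ τ, 0 ≤ K s τ := by
    filter_upwards [hlt] with s hs τ
    rw [hKeq]
    split_ifs with h
    · exact mul_nonneg (Real.rpow_nonneg (by linarith) _) (Real.rpow_nonneg (by linarith) _)
    · exact le_rfl
  have hint : Integrable (Function.uncurry fun s τ => K s τ * w τ) (μ.prod μ) := by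
    rw [integrable_prod_iff']
    · constructor
      · filter_upwards [hlt] with τ hτ
        exact (hKint τ hτ.1 hτ.2).mul_const (w τ)
      · have : Integrable (fun τ => Real.Gamma α * Real.Gamma (1 - α) * ‖w τ‖) μ :=
          hw.norm.const_mul _
        refine this.congr ?_
        filter_upwards [hlt] with τ hτ
        rw [← hKval τ hτ.1 hτ.2, ← integral_mul_const]
        apply integral_congr_ae
        filter_upwards [hKnn] with s hs
        simp only [Function.uncurry, norm_mul, Real.norm_of_nonneg (hs τ)]
    · exact hKm.aestronglyMeasurable.mul hw.1.comp_snd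
  have hswap := integral_integral_swap hint
  have hR : ∫ τ, ∫ s, K s τ * w τ ∂μ ∂μ =
      Real.Gamma α * Real.Gamma (1 - α) * ∫ τ in a..t, w τ := by
    rw [intervalIntegral.integral_of_le hat, ← integral_const_mul]
    apply integral_congr_ae
    filter_upwards [hlt] with τ hτ
    rw [integral_mul_const, hKval τ hτ.1 hτ.2]
  have hL : rlInt a (1 - α) (rlInt a α w) t =
      1 / Real.Gamma (1 - α) * (1 / Real.Gamma α * ∫ s, ∫ τ, K s τ * w τ ∂μ ∂μ) := by
    rw [rlInt, if_neg hαn, intervalIntegral.integral_of_le hat]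
    congr 1
    rw [← integral_const_mul]
    apply integral_congr_ae
    filter_upwards [hlt] with s hs
    rw [rlInt, if_neg hα.ne', intervalIntegral.integral_of_le hs.1.le, mul_left_comm]
    congr 1
    rw [← integral_const_mul]
    have e1 : ∀ τ, K s τ * w τ = (Iio s).indicator
        (fun τ => (t - s) ^ (1 - α - 1) * ((s - τ) ^ (α - 1) * w τ)) τ := by
      intro τ
      rw [hKeq, indicator_apply]
      simp only [mem_Iio]
      split_ifs
      · ring
      · simp
    simp_rw [e1]
    rw [integral_indicator measurableSet_Iio, hμ, Measure.restrict_restrict measurableSet_Iio]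
    have : Iio s ∩ Ioc a t = Ioo a s := by
      ext x
      simp only [mem_inter_iff, mem_Ioc, mem_Iio, mem_Ioo]
      constructor
      · rintro ⟨h1, h2, _⟩; exact ⟨h2, h1⟩
      · rintro ⟨h1, h2⟩; exact ⟨h2, h1, (h2.trans hs.2).le⟩
    rw [this, integral_Ioc_eq_integral_Ioo]
  rw [hL, hswap, hR]
  field_simp

structure FG {m : ℕ} (a d L M : ℝ)
    (F : EuclideanSpace ℝ (Fin m) → ℝ → EuclideanSpace ℝ (Fin m)) : Prop where
  hL : 0 ≤ L
  hM : 0 ≤ M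
  meas : ∀ x, AEStronglyMeasurable (fun t => F x t) (volume.restrict (Ioc a d))
  lip : ∀ᵐ t ∂(volume.restrict (Ioc a d)), ∀ x y, ‖F y t - F x t‖ ≤ L * ‖y - x‖
  bdd : ∀ᵐ t ∂(volume.restrict (Ioc a d)), ‖F 0 t‖ ≤ M

lemma FG.mono {m : ℕ} {a d L M : ℝ}
    {F : EuclideanSpace ℝ (Fin m) → ℝ → EuclideanSpace ℝ (Fin m)} (h : FG a d L M F)
    {b : ℝ} (hb : b ≤ d) : FG a b L M F := by
  have hs : Ioc a b ⊆ Ioc a d := Ioc_subset_Ioc le_rfl hb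
  exact ⟨h.hL, h.hM, fun x => (h.meas x).mono_measure (Measure.restrict_mono hs le_rfl),
    ae_restrict_of_ae_restrict_of_subset hs h.lip, ae_restrict_of_ae_restrict_of_subset hs h.bdd⟩

lemma FG.comp_meas {m : ℕ} {a d L M : ℝ}
    {F : EuclideanSpace ℝ (Fin m) → ℝ → EuclideanSpace ℝ (Fin m)} (h : FG a d L M F)
    {q : ℝ → EuclideanSpace ℝ (Fin m)} (hq : ContinuousOn q (Icc a d)) :
    AEStronglyMeasurable (fun t => F (q t) t) (volume.restrict (Ioc a d)) := by
  have hqm : AEStronglyMeasurable q (volume.restrict (Ioc a d)) :=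
    (hq.mono Ioc_subset_Icc_self).aestronglyMeasurable measurableSet_Ioc
  obtain ⟨g, hg, hqg⟩ := hqm
  have h1 : AEStronglyMeasurable (fun t => F (g t) t) (volume.restrict (Ioc a d)) := by
    refine aestronglyMeasurable_of_tendsto_ae Filter.atTop
      (f := fun n t => F (hg.approx n t) t) ?_ ?_
    · intro n
      have : (fun t => F (hg.approx n t) t) = fun t =>
          ∑ y ∈ (hg.approx n).range, ((hg.approx n) ⁻¹' {y}).indicator (fun t => F y t) t := by
        ext1 t
        rw [Finset.sum_eq_single (hg.approx n t)]
        · simp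
        · intro y _ hy
          rw [indicator_of_notMem]
          simpa using hy.symm
        · intro hn
          exact absurd (SimpleFunc.mem_range_self _ t) hn
      rw [this]
      refine Finset.aestronglyMeasurable_fun_sum _ fun y _ => ?_
      exact (h.meas y).indicator ((hg.approx n).measurableSet_fiber y)
    · filter_upwards [h.lip] with t ht
      have hc : Continuous fun x => F x t := by
        apply LipschitzWith.continuous (K := ⟨L, h.hL⟩)
        refine LipschitzWith.of_dist_le_mul fun x y => ?_
        rw [dist_eq_norm, dist_eq_norm]
        exact ht y x
      exact (hc.tendsto _).comp (hg.tendsto_approx t)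
  refine h1.congr ?_
  filter_upwards [hqg] with t ht
  rw [ht]

lemma FG.bw {m : ℕ} {a d L M : ℝ}
    {F : EuclideanSpace ℝ (Fin m) → ℝ → EuclideanSpace ℝ (Fin m)} (h : FG a d L M F)
    {q : ℝ → EuclideanSpace ℝ (Fin m)} (hq : ContinuousOn q (Icc a d)) :
    ∃ N, 0 ≤ N ∧ ∀ i, BW a d N (fun t => F (q t) t i) := by
  obtain ⟨C, hC⟩ := isCompact_Icc.exists_bound_of_continuousOn hq
  refine ⟨L * |C| + M, add_nonneg (mul_nonneg h.hL (abs_nonneg _)) h.hM, fun i => ⟨?_, ?_⟩⟩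
  · exact (EuclideanSpace.proj (𝕜 := ℝ) i).continuous.comp_aestronglyMeasurable (h.comp_meas hq)
  · filter_upwards [h.lip, h.bdd, self_mem_ae_restrict measurableSet_Ioc] with t h1 h2 h3
    have h4 : |F (q t) t i| ≤ ‖F (q t) t‖ := by
      rw [← Real.norm_eq_abs]; exact PiLp.norm_apply_le _ i
    have h5 := h1 0 (q t)
    rw [sub_zero] at h5
    have h6 : ‖q t‖ ≤ |C| := (hC t (Ioc_subset_Icc_self h3)).trans (le_abs_self C)
    have h7 := norm_le_norm_add_norm_sub' (F (q t) t) (F 0 t)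
    have h8 : L * ‖q t‖ ≤ L * |C| := mul_le_mul_of_nonneg_left h6 h.hL
    linarith

lemma norm_le_sum {m : ℕ} (x : EuclideanSpace ℝ (Fin m)) : ‖x‖ ≤ ∑ i, |x i| := by
  rw [EuclideanSpace.norm_eq]
  apply Real.sqrt_le_iff.2
  refine ⟨Finset.sum_nonneg fun _ _ => abs_nonneg _, ?_⟩
  exact Finset.sum_sq_le_sq_sum_of_nonneg (fun _ _ => abs_nonneg _)

lemma exists_lam {m : ℕ} {α : Fin m → ℝ} (hα : ∀ i, 0 < α i) (L : ℝ) :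
    ∃ lam : ℝ, 0 < lam ∧ ∑ i, L * (1 / lam) ^ (α i) ≤ 1 / 2 := by
  have h : Filter.Tendsto (fun lam : ℝ => ∑ i, L * (1 / lam) ^ (α i)) Filter.atTop
      (nhds (∑ i : Fin m, L * 0)) := by
    refine tendsto_finsetSum _ fun i _ => Filter.Tendsto.const_mul _ ?_
    have h1 : Filter.Tendsto (fun lam : ℝ => 1 / lam) Filter.atTop (nhds 0) := by
      simpa using tendsto_inv_atTop_zero (𝕜 := ℝ)
    have h2 := h1.rpow_const (p := α i) (Or.inr (hα i).le)
    rwa [Real.zero_rpow (hα i).ne'] at h2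
  simp only [mul_zero, Finset.sum_const_zero] at h
  have h2 := (h.eventually (Iic_mem_nhds (by norm_num : (0:ℝ) < 1 / 2))).and
    (Filter.eventually_gt_atTop 0)
  obtain ⟨l, h3, h4⟩ := h2.exists
  exact ⟨l, h4, h3⟩

/-- the key contraction estimate -/
lemma contract {m : ℕ} {a d L M : ℝ}
    {F : EuclideanSpace ℝ (Fin m) → ℝ → EuclideanSpace ℝ (Fin m)} (h : FG a d L M F)
    {α : Fin m → ℝ} (hα : ∀ i, 0 < α i) {lam : ℝ} (hl : 0 < lam)
    (hs : ∑ i, L * (1 / lam) ^ (α i) ≤ 1 / 2)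
    {p q : ℝ → EuclideanSpace ℝ (Fin m)} (hp : ContinuousOn p (Icc a d))
    (hq : ContinuousOn q (Icc a d)) {C : ℝ} (hC : 0 ≤ C)
    (hpq : ∀ t ∈ Icc a d, ‖p t - q t‖ ≤ C * Real.exp (lam * (t - a)))
    {t : ℝ} (ht : t ∈ Icc a d) :
    ∑ i, |rlInt a (α i) (fun τ => F (p τ) τ i) t - rlInt a (α i) (fun τ => F (q τ) τ i) t|
      ≤ 1 / 2 * C * Real.exp (lam * (t - a)) := by
  obtain ⟨N, hN, hpw⟩ := h.bw hp
  obtain ⟨N', hN', hqw⟩ := h.bw hq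
  have key : ∀ i, |rlInt a (α i) (fun τ => F (p τ) τ i) t -
      rlInt a (α i) (fun τ => F (q τ) τ i) t| ≤
      (L * C) * (1 / lam) ^ (α i) * Real.exp (lam * (t - a)) := by
    intro i
    refine rlInt_gronwall ((hpw i).mono le_rfl ht.2) ((hqw i).mono le_rfl ht.2) ht.1 (hα i) hl
      (mul_nonneg h.hL hC) ?_
    have h1 := (h.mono ht.2).lip
    filter_upwards [h1, self_mem_ae_restrict measurableSet_Ioc] with τ h2 h3
    have h4 : |(F (p τ) τ - F (q τ) τ) i| ≤ ‖F (p τ) τ - F (q τ) τ‖ := by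
      rw [← Real.norm_eq_abs]; exact PiLp.norm_apply_le _ i
    have h5 := h2 (q τ) (p τ)
    have h6 := hpq τ ⟨h3.1.le, h3.2.trans ht.2⟩
    calc |F (p τ) τ i - F (q τ) τ i| ≤ _ := h4
      _ ≤ _ := h5
      _ ≤ _ := mul_le_mul_of_nonneg_left h6 h.hL
      _ = _ := by ring
  calc _ ≤ ∑ i, (L * C) * (1 / lam) ^ (α i) * Real.exp (lam * (t - a)) :=
        Finset.sum_le_sum fun i _ => key i
    _ = (∑ i, L * (1 / lam) ^ (α i)) * C * Real.exp (lam * (t - a)) := by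
        rw [Finset.sum_mul, Finset.sum_mul]
        refine Finset.sum_congr rfl fun i _ => by ring
    _ ≤ _ := by gcongr

def IntEq {m : ℕ} (a d : ℝ) (α : Fin m → ℝ) (qa : EuclideanSpace ℝ (Fin m))
    (F : EuclideanSpace ℝ (Fin m) → ℝ → EuclideanSpace ℝ (Fin m))
    (q : ℝ → EuclideanSpace ℝ (Fin m)) : Prop :=
  ContinuousOn q (Icc a d) ∧ ∀ t ∈ Icc a d, ∀ i,
    q t i = qa i + rlInt a (α i) (fun τ => F (q τ) τ i) t

lemma intEq_unique {m : ℕ} {a d L M : ℝ} (had : a ≤ d)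
    {F : EuclideanSpace ℝ (Fin m) → ℝ → EuclideanSpace ℝ (Fin m)} (h : FG a d L M F)
    {α : Fin m → ℝ} (hα : ∀ i, 0 < α i) {qa : EuclideanSpace ℝ (Fin m)}
    {p q : ℝ → EuclideanSpace ℝ (Fin m)} (hp : IntEq a d α qa F p) (hq : IntEq a d α qa F q) :
    EqOn p q (Icc a d) := by
  obtain ⟨lam, hl, hs⟩ := exists_lam hα L
  have hc : ContinuousOn (fun t => Real.exp (-(lam * (t - a))) * ‖p t - q t‖) (Icc a d) :=
    (by fun_prop : Continuous fun t => Real.exp (-(lam * (t - a)))).continuousOn.mul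
      (hp.1.sub hq.1).norm
  obtain ⟨t0, ht0, hmax⟩ := isCompact_Icc.exists_isMaxOn (nonempty_Icc.2 had) hc
  set C := Real.exp (-(lam * (t0 - a))) * ‖p t0 - q t0‖ with hCdef
  have hC : 0 ≤ C := by positivity
  have hpq : ∀ t ∈ Icc a d, ‖p t - q t‖ ≤ C * Real.exp (lam * (t - a)) := by
    intro t ht
    have h1 : Real.exp (-(lam * (t - a))) * ‖p t - q t‖ ≤ C := hmax ht
    rw [Real.exp_neg] at h1
    rwa [inv_mul_le_iff₀ (Real.exp_pos _), mul_comm] at h1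
  have h2 := contract h hα hl hs hp.1 hq.1 hC hpq ht0
  have h3 : ‖p t0 - q t0‖ ≤ 1 / 2 * C * Real.exp (lam * (t0 - a)) := by
    refine (norm_le_sum _).trans (le_trans (le_of_eq ?_) h2)
    refine Finset.sum_congr rfl fun i _ => ?_
    rw [PiLp.sub_apply, hp.2 t0 ht0 i, hq.2 t0 ht0 i]
    congr 1
    ring
  have h4 : C ≤ 1 / 2 * C := by
    calc C ≤ Real.exp (-(lam * (t0 - a))) * (1 / 2 * C * Real.exp (lam * (t0 - a))) := by
          rw [hCdef]; gcongr
      _ = 1 / 2 * C := by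
          rw [Real.exp_neg]
          field_simp
  have h5 : C = 0 := by linarith
  intro t ht
  have h6 := hpq t ht
  rw [h5, zero_mul] at h6
  exact sub_eq_zero.1 (norm_le_zero_iff.1 h6)

lemma intEq_exists {m : ℕ} {a d L M : ℝ} (had : a ≤ d)
    {F : EuclideanSpace ℝ (Fin m) → ℝ → EuclideanSpace ℝ (Fin m)} (h : FG a d L M F)
    {α : Fin m → ℝ} (hα : ∀ i, 0 < α i ∧ α i ≤ 1) (qa : EuclideanSpace ℝ (Fin m)) :
    ∃ q, IntEq a d α qa F q := by
  obtain ⟨lam, hl, hs⟩ := exists_lam (fun i => (hα i).1) L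
  let E : C(Icc a d, EuclideanSpace ℝ (Fin m)) → ℝ → EuclideanSpace ℝ (Fin m) :=
    fun v t => Real.exp (lam * (t - a)) • v (projIcc a d had t)
  have hE : ∀ v, ContinuousOn (E v) (Icc a d) := by
    intro v
    have h1 : Continuous fun t => v (projIcc a d had t) := v.continuous.comp continuous_projIcc
    have h2 : Continuous fun t : ℝ => Real.exp (lam * (t - a)) := by fun_prop
    exact (h2.smul h1).continuousOn
  have hTc : ∀ v, Continuous fun t : Icc a d => (WithLp.toLp 2 (fun i =>
      Real.exp (-(lam * ((t:ℝ) - a))) * (qa i + rlInt a (α i) (fun τ => F (E v τ) τ i) t)) :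
        EuclideanSpace ℝ (Fin m)) := by
    intro v
    refine (PiLp.continuous_toLp 2 _).comp (continuous_pi fun i => ?_)
    obtain ⟨N, hN, hw⟩ := h.bw (hE v)
    have h1 := continuousOn_iff_continuous_domRestrict.1
      (rlInt_cont (hw i) hN (hα i).1 (hα i).2)
    have h2 : Continuous fun t : Icc a d => Real.exp (-(lam * ((t:ℝ) - a))) := by fun_prop
    exact h2.mul (continuous_const.add h1)
  let T : C(Icc a d, EuclideanSpace ℝ (Fin m)) → C(Icc a d, EuclideanSpace ℝ (Fin m)) :=
    fun v => ⟨_, hTc v⟩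
  have hT : ∀ v t i, T v t i =
      Real.exp (-(lam * ((t:ℝ) - a))) * (qa i + rlInt a (α i) (fun τ => F (E v τ) τ i) t) := by
    intro v t i
    rfl
  have hcon : ContractingWith (1 / 2) T := by
    refine ⟨by norm_num, LipschitzWith.of_dist_le_mul fun u v => ?_⟩
    rw [ContinuousMap.dist_le (by positivity)]
    intro t
    have hpq : ∀ s ∈ Icc a d, ‖E u s - E v s‖ ≤ dist u v * Real.exp (lam * (s - a)) := by
      intro s hs
      simp only [E]
      rw [← smul_sub, norm_smul, Real.norm_of_nonneg (Real.exp_pos _).le, mul_comm,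
        ← dist_eq_norm]
      gcongr
      exact ContinuousMap.dist_apply_le_dist _
    have h2 := contract h (fun i => (hα i).1) hl hs (hE u) (hE v) dist_nonneg hpq t.2
    rw [dist_eq_norm]
    calc ‖T u t - T v t‖ ≤ ∑ i, |(T u t - T v t) i| := norm_le_sum _
      _ = Real.exp (-(lam * ((t:ℝ) - a))) * ∑ i, |rlInt a (α i) (fun τ => F (E u τ) τ i) t -
            rlInt a (α i) (fun τ => F (E v τ) τ i) t| := by
          rw [Finset.mul_sum]
          refine Finset.sum_congr rfl fun i _ => ?_
          rw [PiLp.sub_apply, hT, hT, ← mul_sub, abs_mul, abs_of_pos (Real.exp_pos _)]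
          congr 2
          ring
      _ ≤ Real.exp (-(lam * ((t:ℝ) - a))) *
            (1 / 2 * dist u v * Real.exp (lam * ((t:ℝ) - a))) := by gcongr
      _ = 1 / 2 * dist u v := by
          rw [Real.exp_neg]
          field_simp
      _ = _ := by norm_num
  have hfix := hcon.fixedPoint_isFixedPt
  set v := ContractingWith.fixedPoint T hcon
  refine ⟨E v, hE v, fun t ht i => ?_⟩
  have h1 : v ⟨t, ht⟩ i = T v ⟨t, ht⟩ i := by rw [hfix]
  rw [hT] at h1
  have h2 : E v t i = Real.exp (lam * (t - a)) * v ⟨t, ht⟩ i := by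
    simp only [E, PiLp.smul_apply, smul_eq_mul]
    rw [projIcc_of_mem had ht]
  rw [h2, h1, ← mul_assoc, ← Real.exp_add]
  simp

lemma rlInt_inv' {a t : ℝ} {w : ℝ → ℝ} (hat : a ≤ t) (hw : IntervalIntegrable w volume a t)
    {α : ℝ} (hα : 0 < α) (hα1 : α ≤ 1) {u : ℝ → ℝ} (hu : ∀ s ∈ Icc a t, u s = rlInt a α w s) :
    rlInt a (1 - α) u t = ∫ τ in a..t, w τ := by
  rcases hα1.eq_or_lt with rfl | hlt
  · rw [rlInt, if_pos (by norm_num), hu t (right_mem_Icc.2 hat), rlInt]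
    simp
  · rw [← rlInt_inv hat hw hα hlt]
    refine rlInt_congr hat (by linarith) ?_
    filter_upwards [self_mem_ae_restrict measurableSet_Ioc] with s hs
    exact hu s (Ioc_subset_Icc_self hs)

lemma BW.of_cont {a d : ℝ} {u : ℝ → ℝ} (hu : ContinuousOn u (Icc a d)) :
    ∃ M, 0 ≤ M ∧ BW a d M u := by
  obtain ⟨C, hC⟩ := isCompact_Icc.exists_bound_of_continuousOn hu
  refine ⟨|C|, abs_nonneg _, (hu.mono Ioc_subset_Icc_self).aestronglyMeasurable measurableSet_Ioc,
    ?_⟩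
  filter_upwards [self_mem_ae_restrict measurableSet_Ioc] with s hs
  exact (hC s (Ioc_subset_Icc_self hs)).trans (le_abs_self C)

/-- if the fractional integral of a continuous function vanishes, so does the function -/
lemma rlInt_inj {a d : ℝ} (had : a < d) {u : ℝ → ℝ} (hu : ContinuousOn u (Icc a d))
    {α : ℝ} (hα : 0 ≤ α) (hα1 : α < 1) (h : ∀ t ∈ Icc a d, rlInt a α u t = 0) :
    ∀ t ∈ Icc a d, u t = 0 := by
  rcases hα.eq_or_lt with rfl | hpos
  · intro t ht
    simpa [rlInt] using h t ht
  have h1 : ∀ t ∈ Icc a d, ∫ τ in a..t, u τ = 0 := by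
    intro t ht
    have hi : IntervalIntegrable u volume a t := by
      apply ContinuousOn.intervalIntegrable
      rw [uIcc_of_le ht.1]
      exact hu.mono (Icc_subset_Icc le_rfl ht.2)
    rw [← rlInt_inv ht.1 hi hpos hα1]
    rw [rlInt_congr (v := fun _ => 0) ht.1 (by linarith)]
    · simp [rlInt]
    · filter_upwards [self_mem_ae_restrict measurableSet_Ioc] with s hs
      exact h s ⟨hs.1.le, hs.2.trans ht.2⟩
  have h2 : EqOn u (fun _ => 0) (Icc a d) := by
    have hio : ∀ t ∈ Ioo a d, u t = 0 := by
      intro t ht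
      have hd : HasDerivAt (fun x => ∫ τ in a..x, u τ) (u t) t := by
        apply intervalIntegral.integral_hasDerivAt_right
        · apply ContinuousOn.intervalIntegrable
          rw [uIcc_of_le ht.1.le]
          exact hu.mono (Icc_subset_Icc le_rfl ht.2.le)
        · exact (hu.mono Ioo_subset_Icc_self).stronglyMeasurableAtFilter isOpen_Ioo t ht
        · exact hu.continuousAt (Icc_mem_nhds ht.1 ht.2)
      have hz : HasDerivAt (fun x => ∫ τ in a..x, u τ) 0 t := by
        refine (hasDerivAt_const t (0:ℝ)).congr_of_eventuallyEq ?_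
        filter_upwards [Icc_mem_nhds ht.1 ht.2] with x hx using h1 x hx
      exact hd.unique hz
    refine Measure.eqOn_Icc_of_ae_eq (μ := volume) had.ne ?_ hu continuousOn_const
    rw [← restrict_Ioo_eq_restrict_Icc]
    filter_upwards [self_mem_ae_restrict measurableSet_Ioo] with x hx using hio x hx
  exact h2

lemma sol_of_intEq {m : ℕ} {a d L M : ℝ} (had : a < d) {If : Set ℝ} (hsub : Icc a d ⊆ If)
    {F : EuclideanSpace ℝ (Fin m) → ℝ → EuclideanSpace ℝ (Fin m)} (h : FG a d L M F)
    {α : Fin m → ℝ} (hα : ∀ i, 0 < α i ∧ α i ≤ 1) {qa : EuclideanSpace ℝ (Fin m)}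
    {q : ℝ → EuclideanSpace ℝ (Fin m)} (hq : IntEq a d α qa F q) :
    IsCaputoLocalSol a If univ α qa F q (Icc a d) := by
  refine ⟨⟨left_mem_Icc.2 had.le, Icc_subset_Ici_self, ?_, ordConnected_Icc⟩, hsub, hq.1,
    fun _ _ => mem_univ _, ?_, ?_⟩
  · rw [interior_Icc]; exact nonempty_Ioo.2 had
  · ext i
    rw [hq.2 a (left_mem_Icc.2 had.le) i, rlInt, if_neg (hα i).1.ne']
    simp
  · intro i
    obtain ⟨N, hN, hw⟩ := h.bw hq.1
    refine ⟨0, fun t => F (q t) t i, ?_, ?_, Filter.Eventually.of_forall fun _ => rfl⟩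
    · intro b hb
      rw [integrableOn_Icc_iff_integrableOn_Ioc,
        ← intervalIntegrable_iff_integrableOn_Ioc_of_le hb.1]
      exact ((hw i).mono le_rfl hb.2).intervalIntegrable hb.1
    · filter_upwards [self_mem_ae_restrict measurableSet_Icc] with t ht
      rw [zero_add]
      refine rlInt_inv' ht.1 (((hw i).mono le_rfl ht.2).intervalIntegrable ht.1) (hα i).1 (hα i).2 ?_
      intro s hs
      rw [hq.2 s ⟨hs.1, hs.2.trans ht.2⟩ i]
      ring

lemma intEq_of_sol {m : ℕ} {a b L M : ℝ} (hab : a < b) {If I : Set ℝ}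
    {F : EuclideanSpace ℝ (Fin m) → ℝ → EuclideanSpace ℝ (Fin m)} (h : FG a b L M F)
    {α : Fin m → ℝ} (hα : ∀ i, 0 < α i ∧ α i ≤ 1) {qa : EuclideanSpace ℝ (Fin m)}
    {q : ℝ → EuclideanSpace ℝ (Fin m)} {Ω : Set (EuclideanSpace ℝ (Fin m))}
    (hsol : IsCaputoLocalSol a If Ω α qa F q I) (hb : b ∈ I) :
    IntEq a b α qa F q := by
  obtain ⟨⟨haI, -, -, hord⟩, -, hcont, -, hqa, hi⟩ := hsol
  have hsub : Icc a b ⊆ I := hord.out haI hb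
  have hqc : ContinuousOn q (Icc a b) := hcont.mono hsub
  refine ⟨hqc, ?_⟩
  suffices H : ∀ i, ∀ t ∈ Icc a b, q t i - qa i - rlInt a (α i) (fun τ => F (q τ) τ i) t = 0 by
    intro t ht i
    linarith [H i t ht]
  intro i
  obtain ⟨c, g, hg, hc, hgF⟩ := hi i
  obtain ⟨N, hN, hw⟩ := h.bw hqc
  have hαi := hα i
  set w : ℝ → ℝ := fun τ => F (q τ) τ i with hwdef
  set u : ℝ → ℝ := fun τ => q τ i - qa i with hudef
  have huc : ContinuousOn u (Icc a b) :=
    ((EuclideanSpace.proj (𝕜 := ℝ) i).continuous.comp_continuousOn hqc).sub continuousOn_const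
  obtain ⟨Mu, hMu, huw⟩ := BW.of_cont huc
  have hwi : ∀ t ∈ Icc a b, IntervalIntegrable w volume a t := fun t ht =>
    ((hw i).mono le_rfl ht.2).intervalIntegrable ht.1
  -- the integrals of `g` and `w` agree
  have hgw : ∀ t ∈ Icc a b, ∫ τ in a..t, g τ = ∫ τ in a..t, w τ := by
    intro t ht
    rw [intervalIntegral.integral_of_le ht.1, intervalIntegral.integral_of_le ht.1]
    apply integral_congr_ae
    have hs : Ioc a t ⊆ I :=
      (Ioc_subset_Icc_self.trans (Icc_subset_Icc le_rfl ht.2)).trans hsub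
    exact ae_restrict_of_ae_restrict_of_subset hs hgF
  have hWc : ContinuousOn (fun t => c + ∫ τ in a..t, w τ) (Icc a b) := by
    refine continuousOn_const.add ?_
    have := intervalIntegral.continuousOn_primitive_interval' (hwi b (right_mem_Icc.2 hab.le))
      left_mem_uIcc
    rwa [uIcc_of_le hab.le] at this
  have hRc : ContinuousOn (rlInt a (1 - α i) u) (Icc a b) := by
    rcases hαi.2.eq_or_lt with h1 | h1
    · refine huc.congr fun t _ => ?_
      rw [rlInt, if_pos (by linarith)]
    · exact rlInt_cont huw hMu (by linarith) (by linarith [hαi.1])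
  have heq : EqOn (rlInt a (1 - α i) u) (fun t => c + ∫ τ in a..t, w τ) (Icc a b) := by
    refine Measure.eqOn_Icc_of_ae_eq (μ := volume) hab.ne ?_ hRc hWc
    filter_upwards [ae_restrict_of_ae_restrict_of_subset hsub hc,
      self_mem_ae_restrict measurableSet_Icc] with t h1 h2
    rw [h1, hgw t h2]
  have hc0 : c = 0 := by
    have h1 := heq (left_mem_Icc.2 hab.le)
    simp only [intervalIntegral.integral_same, add_zero] at h1
    rw [← h1, rlInt]
    split_ifs
    · simp [hudef, hqa]
    · simp
  have hJc := rlInt_cont (hw i) hN hαi.1 hαi.2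
  obtain ⟨MJ, hMJ, hJw⟩ := BW.of_cont hJc
  refine rlInt_inj hab (huc.sub hJc) (α := 1 - α i) (by linarith) (by linarith) ?_
  intro t ht
  have h1 := rlInt_sub huw hJw (α := 1 - α i) (by linarith) ht
  have h2 := rlInt_inv' ht.1 (hwi t ht) hαi.1 hαi.2 (u := rlInt a (α i) w) (fun _ _ => rfl)
  have h3 := heq ht
  simp only [hc0, zero_add] at h3
  rw [h2, h3, sub_self] at h1
  exact h1

lemma FG.of_hyp {a : ℝ} {If : Set ℝ} (haI : a ∈ If) (hIord : If.OrdConnected) {m : ℕ}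
    {F : EuclideanSpace ℝ (Fin m) → ℝ → EuclideanSpace ℝ (Fin m)}
    (hFmeas : ∀ x, MeasureTheory.AEStronglyMeasurable (fun t => F x t)
      (MeasureTheory.volume.restrict If))
    (hFcont : ∀ᵐ t ∂(MeasureTheory.volume.restrict If), Continuous fun x => F x t)
    (hbdd : ∀ K : Set (EuclideanSpace ℝ (Fin m)), IsCompact K →
      ∀ c ∈ If, ∀ d ∈ If, c ≤ d → ∃ M : ℝ, 0 ≤ M ∧ ∀ x ∈ K,
        ∀ᵐ t ∂(MeasureTheory.volume.restrict (Set.Icc c d)), ‖F x t‖ ≤ M)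
    (hlip : ∀ c ∈ If, ∀ d ∈ If, c ≤ d → ∃ L : ℝ, 0 ≤ L ∧
      ∀ x₁ x₂ : EuclideanSpace ℝ (Fin m),
        ∀ᵐ t ∂(MeasureTheory.volume.restrict (Set.Icc c d)),
          ‖F x₂ t - F x₁ t‖ ≤ L * ‖x₂ - x₁‖) {d : ℝ} (hd : d ∈ If) (had : a ≤ d) :
    ∃ L M, FG a d L M F := by
  obtain ⟨L, hL, hlip⟩ := hlip a haI d hd had
  obtain ⟨M, hM, hb⟩ := hbdd {0} isCompact_singleton a haI d hd had
  have hs : Ioc a d ⊆ If := Ioc_subset_Icc_self.trans (hIord.out haI hd)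
  refine ⟨L, M, hL, hM, fun x => (hFmeas x).mono_measure (Measure.restrict_mono hs le_rfl), ?_,
    ae_restrict_of_ae_restrict_of_subset Ioc_subset_Icc_self (hb 0 rfl)⟩
  obtain ⟨S, hSc, hSd⟩ := TopologicalSpace.exists_countable_dense (EuclideanSpace ℝ (Fin m))
  have h1 : ∀ᵐ t ∂(volume.restrict (Ioc a d)), ∀ p ∈ S ×ˢ S,
      ‖F p.2 t - F p.1 t‖ ≤ L * ‖p.2 - p.1‖ := by
    rw [ae_ball_iff (hSc.prod hSc)]
    intro p _
    exact ae_restrict_of_ae_restrict_of_subset Ioc_subset_Icc_self (hlip p.1 p.2)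
  have h4 : ∀ᵐ t ∂(volume.restrict (Ioc a d)), Continuous fun x => F x t :=
    ae_restrict_of_ae_restrict_of_subset hs hFcont
  filter_upwards [h1, h4] with t h2 h3
  have hcl : IsClosed {p : EuclideanSpace ℝ (Fin m) × EuclideanSpace ℝ (Fin m) |
      ‖F p.2 t - F p.1 t‖ ≤ L * ‖p.2 - p.1‖} :=
    isClosed_le ((h3.comp continuous_snd).sub (h3.comp continuous_fst)).norm
      (continuous_const.mul (continuous_snd.sub continuous_fst).norm)
  have hall : ∀ p : EuclideanSpace ℝ (Fin m) × EuclideanSpace ℝ (Fin m),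
      ‖F p.2 t - F p.1 t‖ ≤ L * ‖p.2 - p.1‖ := by
    intro p
    have h5 : p ∈ closure (S ×ˢ S) := (hSd.prod hSd) p
    exact closure_minimal (fun p hp => h2 p hp) hcl h5
  exact fun x y => hall (x, y)

theorem statement8 (a : ℝ) (If : Set ℝ)
    (haI : a ∈ If) (hIsub : If ⊆ Set.Ici a) (hIint : (interior If).Nonempty)
    (hIord : If.OrdConnected)
    (m : ℕ) (hm : 0 < m)
    (α : Fin m → ℝ) (hα : ∀ i, 0 < α i ∧ α i ≤ 1)
    (qa : EuclideanSpace ℝ (Fin m))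
    (F : EuclideanSpace ℝ (Fin m) → ℝ → EuclideanSpace ℝ (Fin m))
    -- Carathéodory assumptions
    (hFmeas : ∀ x, MeasureTheory.AEStronglyMeasurable (fun t => F x t)
      (MeasureTheory.volume.restrict If))
    (hFcont : ∀ᵐ t ∂(MeasureTheory.volume.restrict If), Continuous fun x => F x t)
    -- `F` is bounded on compacts
    (hbdd : ∀ K : Set (EuclideanSpace ℝ (Fin m)), IsCompact K →
      ∀ c ∈ If, ∀ d ∈ If, c ≤ d → ∃ M : ℝ, 0 ≤ M ∧ ∀ x ∈ K,
        ∀ᵐ t ∂(MeasureTheory.volume.restrict (Set.Icc c d)), ‖F x t‖ ≤ M)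
    -- `F` is globally Lipschitz continuous in its first variable
    (hlip : ∀ c ∈ If, ∀ d ∈ If, c ≤ d → ∃ L : ℝ, 0 ≤ L ∧
      ∀ x₁ x₂ : EuclideanSpace ℝ (Fin m),
        ∀ᵐ t ∂(MeasureTheory.volume.restrict (Set.Icc c d)),
          ‖F x₂ t - F x₁ t‖ ≤ L * ‖x₂ - x₁‖) :
    ∀ (q : ℝ → EuclideanSpace ℝ (Fin m)) (I : Set ℝ),
      IsMaximalSol a If (Set.univ : Set (EuclideanSpace ℝ (Fin m))) α qa F q I →
      I = If := by
  intro q I hmax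
  obtain ⟨hsol, hext⟩ := hmax
  have hII : I ⊆ If := hsol.2.1
  by_contra hne
  obtain ⟨d, hd, hdI⟩ : ∃ d ∈ If, d ∉ I := by
    by_contra hc
    push Not at hc
    exact hne (Set.Subset.antisymm hII hc)
  have haI' : a ∈ I := hsol.1.1
  have hlt : ∀ t ∈ I, t < d := by
    intro t ht
    by_contra hc
    exact hdI (hsol.1.2.2.2.out haI' ht ⟨hIsub hd, not_lt.1 hc⟩)
  have had : a < d := hlt a haI'
  obtain ⟨L, M, hFG⟩ := FG.of_hyp haI hIord hFmeas hFcont hbdd hlip hd had.le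
  obtain ⟨p, hp⟩ := intEq_exists had.le hFG hα qa
  have hpsol := sol_of_intEq had (hIord.out haI hd) hFG hα hp
  have hsub : I ⊆ Icc a d := fun t ht => ⟨hsol.1.2.1 ht, (hlt t ht).le⟩
  have hEq : EqOn p q I := by
    intro t ht
    have hat : a ≤ t := hsol.1.2.1 ht
    rcases hat.eq_or_lt with rfl | hat'
    · rw [hpsol.2.2.2.2.1, hsol.2.2.2.2.1]
    have hFt := hFG.mono (hlt t ht).le
    have hqt := intEq_of_sol hat' hFt hα hsol ht
    have hpt := intEq_of_sol hat' hFt hα hpsol (hsub ht)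
    exact intEq_unique hat hFt (fun i => (hα i).1) hpt hqt (right_mem_Icc.2 hat)
  have := hext p (Icc a d) hpsol hsub hEq
  exact hdI (this ▸ right_mem_Icc.2 had.le)
end

section
/- Let a ∈ ℝ, let I_f be an interval with least element a, nonempty interior, and I_f ⊂ [a,∞), let Ω ⊂ ℝ^m be a nonempty open set, let α = (α₁,…,α_m) ∈ (0,1]^m, let q_a ∈ Ω, and let f : Ω × I_f → ℝ^m be a Carathéodory function that is bounded on compacts and locally Lipschitz continuous in its first variable. If (q,I) is the maximal solution of the Caputo Cauchy problem ( _cD^{α_i}_{a+}[q_i] = f_i(q(·),·) a.e., q(a) = q_a ), then either I = I_f, or I = [a,b) for some b ∈ I_f with b > a and for every compact subset K ⊂ Ω there exists t ∈ I with q(t) ∉ K. -/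
open MeasureTheory Set

noncomputable def fracJ (a α : ℝ) (h : ℝ → ℝ) (t : ℝ) : ℝ :=
  (1 / Real.Gamma α) * ∫ τ in a..t, (t - τ) ^ (α - 1) * h τ

/-- essentially bounded measurable functions on `(a,T]`. -/
def EssB (a T M : ℝ) (h : ℝ → ℝ) : Prop :=
  AEStronglyMeasurable h (volume.restrict (Ioc a T)) ∧
    ∀ᵐ s ∂(volume.restrict (Ioc a T)), |h s| ≤ M

lemma ker_ii {α : ℝ} (hα : 0 < α) (t c d : ℝ) :
    IntervalIntegrable (fun s => (t - s) ^ (α - 1)) volume c d := by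
  have h := (intervalIntegral.intervalIntegrable_rpow' (a := t - c) (b := t - d)
    (r := α - 1) (by linarith)).comp_sub_left t
  simpa using h

lemma ker_int {α : ℝ} (hα : 0 < α) (t c d : ℝ) :
    ∫ s in c..d, (t - s) ^ (α - 1) = ((t - c) ^ α - (t - d) ^ α) / α := by
  rw [intervalIntegral.integral_comp_sub_left (fun x => x ^ (α - 1)) t,
    integral_rpow (Or.inl (by linarith))]
  simp

lemma EssB.mono {a T M T' : ℝ} {h : ℝ → ℝ} (H : EssB a T M h) (hT : T' ≤ T) : EssB a T' M h :=
  ⟨H.1.mono_measure (Measure.restrict_mono (Ioc_subset_Ioc_right hT) le_rfl),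
   ae_restrict_of_ae_restrict_of_subset (Ioc_subset_Ioc_right hT) H.2⟩

lemma EssB.left {a T M a' : ℝ} {h : ℝ → ℝ} (H : EssB a T M h) (hT : a ≤ a') : EssB a' T M h :=
  ⟨H.1.mono_measure (Measure.restrict_mono (Ioc_subset_Ioc_left hT) le_rfl),
   ae_restrict_of_ae_restrict_of_subset (Ioc_subset_Ioc_left hT) H.2⟩

lemma EssB.ii {a T M : ℝ} {h : ℝ → ℝ} (H : EssB a T M h) (haT : a ≤ T) {u : ℝ → ℝ}
    (hu : IntervalIntegrable u volume a T) :
    IntervalIntegrable (fun s => u s * h s) volume a T := by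
  rw [intervalIntegrable_iff_integrableOn_Ioc_of_le haT] at *
  exact Integrable.mul_bdd (c := M) hu H.1 (by simpa using H.2)

lemma EssB.integrableOn {a T M : ℝ} {h : ℝ → ℝ} (H : EssB a T M h) (haT : a ≤ T) :
    IntervalIntegrable h volume a T := by
  simpa using H.ii haT (u := fun _ => 1) intervalIntegrable_const

lemma EssB.abs_le {a T M : ℝ} {h : ℝ → ℝ} (H : EssB a T M h) (haT : a ≤ T) {u : ℝ → ℝ}
    (hu : IntervalIntegrable u volume a T) (hu0 : ∀ s ∈ Ioc a T, 0 ≤ u s) :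
    |∫ s in a..T, u s * h s| ≤ M * ∫ s in a..T, u s := by
  rw [← intervalIntegral.integral_const_mul, ← Real.norm_eq_abs]
  apply intervalIntegral.norm_integral_le_of_norm_le haT _ (hu.const_mul M)
  have := (ae_restrict_iff' measurableSet_Ioc).1 H.2
  filter_upwards [this] with s hs hm
  have h1 := hs hm
  rw [norm_mul, Real.norm_eq_abs, Real.norm_eq_abs, abs_of_nonneg (hu0 s hm), mul_comm]
  exact mul_le_mul_of_nonneg_right h1 (hu0 s hm)

lemma fracJ_bound {a b t M α : ℝ} (hα : 0 < α) {h : ℝ → ℝ} (hab : a ≤ b) (hbt : b ≤ t)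
    (H : EssB a t M h) (h0 : ∀ s ∈ Ioc a b, h s = 0) :
    |fracJ a α h t| ≤ 1 / Real.Gamma α * (M * ((t - b) ^ α / α)) := by
  have hΓ := Real.Gamma_pos_of_pos hα
  have hii := H.ii (hab.trans hbt) (ker_ii hα t a t)
  rw [fracJ, ← intervalIntegral.integral_add_adjacent_intervals (b := b)
    (hii.mono_set (by rw [uIcc_of_le hab, uIcc_of_le (hab.trans hbt)]; exact Icc_subset_Icc_right hbt))
    (hii.mono_set (by rw [uIcc_of_le hbt, uIcc_of_le (hab.trans hbt)]; exact Icc_subset_Icc_left hab))]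
  have : ∫ s in a..b, (t - s) ^ (α - 1) * h s = 0 := by
    rw [intervalIntegral.integral_of_le hab]
    apply setIntegral_eq_zero_of_forall_eq_zero
    intro s hs
    simp [h0 s hs]
  rw [this, zero_add, abs_mul, abs_of_pos (by positivity)]
  gcongr
  refine ((H.left hab).abs_le hbt (ker_ii hα t b t)
    (fun s hs => Real.rpow_nonneg (by linarith [hs.2]) _)).trans_eq ?_
  rw [ker_int hα]
  simp [Real.zero_rpow hα.ne']

lemma fracJ_holder {a t₁ t₂ M α : ℝ} (hα : 0 < α) (hα1 : α ≤ 1) (hM : 0 ≤ M) {h : ℝ → ℝ}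
    (h1 : a ≤ t₁) (h2 : t₁ ≤ t₂) (H : EssB a t₂ M h) :
    |fracJ a α h t₂ - fracJ a α h t₁| ≤ 1 / Real.Gamma α * (2 * M * ((t₂ - t₁) ^ α / α)) := by
  have hΓ := Real.Gamma_pos_of_pos hα
  have hii := H.ii (h1.trans h2) (ker_ii hα t₂ a t₂)
  have hA := (H.mono h2).ii h1 (ker_ii hα t₂ a t₁)
  have hB := (H.left h1).ii h2 (ker_ii hα t₂ t₁ t₂)
  have hC := (H.mono h2).ii h1 (ker_ii hα t₁ a t₁)
  rw [fracJ, fracJ, ← intervalIntegral.integral_add_adjacent_intervals hA hB, ← mul_sub,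
    abs_mul, abs_of_pos (by positivity : 0 < 1 / Real.Gamma α)]
  gcongr
  have e1 : ∫ s in a..t₁, ((t₁ - s) ^ (α - 1) - (t₂ - s) ^ (α - 1)) * h s
      = (∫ s in a..t₁, (t₁ - s) ^ (α - 1) * h s) - ∫ s in a..t₁, (t₂ - s) ^ (α - 1) * h s := by
    rw [← intervalIntegral.integral_sub hC hA]
    congr 1; ext s; ring
  have hu := (ker_ii hα t₁ a t₁).sub (ker_ii hα t₂ a t₁)
  have b1 : |∫ s in a..t₁, ((t₁ - s) ^ (α - 1) - (t₂ - s) ^ (α - 1)) * h s| ≤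
      M * ∫ s in a..t₁, ((t₁ - s) ^ (α - 1) - (t₂ - s) ^ (α - 1)) := by
    rcases h2.eq_or_lt with rfl | hlt
    · simp
    rcases h1.eq_or_lt with rfl | h1
    · simp
    -- avoid the endpoint
    have e3 : ∀ u : ℝ → ℝ, ∫ s in a..t₁, u s = ∫ s in a..t₁, (if s < t₁ then u s else 0) := by
      intro u
      apply intervalIntegral.integral_congr_ae
      have : ∀ᵐ s : ℝ, s ≠ t₁ := by simp [ae_iff]
      filter_upwards [this] with s hs hm
      rw [uIoc_of_le h1.le] at hm
      rw [if_pos (lt_of_le_of_ne hm.2 hs)]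
    have := (H.mono h2).abs_le h1.le
      (u := fun s => if s < t₁ then (t₁ - s) ^ (α - 1) - (t₂ - s) ^ (α - 1) else 0) ?_ ?_
    · rw [e3, e3 (fun s => (t₁ - s) ^ (α - 1) - (t₂ - s) ^ (α - 1))]
      simpa only [ite_mul, zero_mul] using this
    · refine hu.congr_ae ?_
      have : ∀ᵐ s ∂(volume.restrict (uIoc a t₁)), s ≠ t₁ :=
        ae_restrict_of_ae (by simp [ae_iff])
      filter_upwards [this, ae_restrict_mem measurableSet_uIoc] with s hs hm
      rw [uIoc_of_le h1.le] at hm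
      simp [if_pos (lt_of_le_of_ne hm.2 hs)]
    · intro s hs
      split_ifs with h
      · have := Real.rpow_le_rpow_of_nonpos (x := t₁ - s) (y := t₂ - s) (z := α - 1)
          (by linarith) (by linarith) (by linarith)
        linarith
      · rfl
  have b2 := (H.left h1).abs_le h2 (ker_ii hα t₂ t₁ t₂)
    (fun s hs => Real.rpow_nonneg (by linarith [hs.2]) _)
  rw [intervalIntegral.integral_sub (ker_ii hα t₁ a t₁) (ker_ii hα t₂ a t₁), ker_int hα,
    ker_int hα] at b1
  rw [ker_int hα] at b2
  rw [e1] at b1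
  simp only [sub_self, Real.zero_rpow hα.ne', sub_zero] at b1 b2
  have hle : (t₁ - a) ^ α ≤ (t₂ - a) ^ α :=
    Real.rpow_le_rpow (by linarith) (by linarith) hα.le
  have b1' := b1.trans (show M * ((t₁ - a) ^ α / α - ((t₂ - a) ^ α - (t₂ - t₁) ^ α) / α) ≤
      M * ((t₂ - t₁) ^ α / α) by
    gcongr
    rw [← sub_div]
    gcongr
    linarith)
  rw [abs_le] at *
  constructor <;> linarith [b1'.1, b1'.2, b2.1, b2.2]

lemma EssB.nonneg_bound {a T M : ℝ} {h : ℝ → ℝ} (H : EssB a T M h) : EssB a T |M| h :=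
  ⟨H.1, H.2.mono fun _ hs => hs.trans (le_abs_self M)⟩

lemma fracJ_cont {a T M α : ℝ} (hα : 0 < α) (hα1 : α ≤ 1) {h : ℝ → ℝ}
    (H : EssB a T M h) : ContinuousOn (fracJ a α h) (Icc a T) := by
  have key : ∀ t₁ ∈ Icc a T, ∀ t₂ ∈ Icc a T, |fracJ a α h t₂ - fracJ a α h t₁| ≤
      1 / Real.Gamma α * (2 * |M| * (|t₂ - t₁| ^ α / α)) := by
    intro t₁ h1 t₂ h2
    rcases le_total t₁ t₂ with hle | hle
    · rw [abs_of_nonneg (sub_nonneg.2 hle)]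
      exact fracJ_holder hα hα1 (abs_nonneg M) h1.1 hle (H.nonneg_bound.mono h2.2)
    · rw [abs_sub_comm, abs_sub_comm t₂, abs_of_nonneg (sub_nonneg.2 hle)]
      exact fracJ_holder hα hα1 (abs_nonneg M) h2.1 hle (H.nonneg_bound.mono h1.2)
  intro t₁ h1
  rw [ContinuousWithinAt, tendsto_iff_dist_tendsto_zero]
  have hlim : Filter.Tendsto (fun t₂ => 1 / Real.Gamma α * (2 * |M| * (|t₂ - t₁| ^ α / α)))
      (nhdsWithin t₁ (Icc a T)) (nhds 0) := by
    have : Continuous (fun t₂ => 1 / Real.Gamma α * (2 * |M| * (|t₂ - t₁| ^ α / α))) := by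
      have := Real.continuous_rpow_const hα.le
      fun_prop
    have h2 := this.tendsto t₁
    simp only [sub_self, abs_zero, Real.zero_rpow hα.ne', zero_div, mul_zero] at h2
    exact h2.mono_left nhdsWithin_le_nhds
  refine squeeze_zero' (Filter.Eventually.of_forall fun _ => dist_nonneg) ?_ hlim
  filter_upwards [self_mem_nhdsWithin] with t₂ h2
  exact key t₁ h1 t₂ h2

lemma fracJ_congr {a α t : ℝ} (hat : a ≤ t) {h g : ℝ → ℝ}
    (H : ∀ᵐ s ∂(volume.restrict (Ioc a t)), h s = g s) : fracJ a α h t = fracJ a α g t := by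
  rw [fracJ, fracJ]
  congr 1
  apply intervalIntegral.integral_congr_ae
  rw [uIoc_of_le hat]
  filter_upwards [(ae_restrict_iff' measurableSet_Ioc).1 H] with s hs hm
  rw [hs hm]

lemma EssB_of_cont {a T : ℝ} {w : ℝ → ℝ} (hw : ContinuousOn w (Icc a T)) :
    ∃ M, EssB a T M w := by
  obtain ⟨M, hM⟩ := isCompact_Icc.exists_bound_of_continuousOn hw
  refine ⟨M, (hw.mono Ioc_subset_Icc_self).aestronglyMeasurable measurableSet_Ioc, ?_⟩
  filter_upwards [ae_restrict_mem measurableSet_Ioc] with s hs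
  exact hM s (Ioc_subset_Icc_self hs)

lemma fracJ_sub {a α t M N : ℝ} (hα : 0 < α) (hat : a ≤ t) {h g : ℝ → ℝ}
    (Hh : EssB a t M h) (Hg : EssB a t N g) :
    fracJ a α (fun s => h s - g s) t = fracJ a α h t - fracJ a α g t := by
  rw [fracJ, fracJ, fracJ, ← mul_sub, ← intervalIntegral.integral_sub
    (Hh.ii hat (ker_ii hα t a t)) (Hg.ii hat (ker_ii hα t a t))]
  simp only [mul_sub]

lemma beta_real {α x : ℝ} (hα : 0 < α) (hα1 : α < 1) (hx : 0 < x) :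
    ∫ s in (0:ℝ)..x, (x - s) ^ ((1 - α) - 1) * s ^ (α - 1) =
      Real.Gamma α * Real.Gamma (1 - α) := by
  have h1 := Complex.betaIntegral_scaled (α : ℂ) ((1 - α : ℝ) : ℂ) hx
  have h2 := Complex.Gamma_mul_Gamma_eq_betaIntegral (s := (α : ℂ)) (t := ((1 - α : ℝ) : ℂ))
    (by simpa using hα) (by simpa using hα1)
  have e : (α : ℂ) + ((1 - α : ℝ) : ℂ) = 1 := by push_cast; ring
  rw [e, Complex.Gamma_one, one_mul] at h2
  rw [e, sub_self, Complex.cpow_zero, one_mul, ← h2] at h1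
  have h3 : ((∫ s in (0:ℝ)..x, (x - s) ^ ((1 - α) - 1) * s ^ (α - 1) : ℝ) : ℂ) =
      ((Real.Gamma α * Real.Gamma (1 - α) : ℝ) : ℂ) := by
    rw [Complex.ofReal_mul, ← Complex.Gamma_ofReal, ← Complex.Gamma_ofReal, ← h1,
      ← intervalIntegral.integral_ofReal]
    apply intervalIntegral.integral_congr
    intro s hs
    rw [uIcc_of_le hx.le] at hs
    simp only
    rw [Complex.ofReal_mul, Complex.ofReal_cpow (sub_nonneg.2 hs.2), Complex.ofReal_cpow hs.1]
    push_cast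
    ring
  exact_mod_cast h3

noncomputable def kapp (α l : ℝ) : ℝ → ℝ := indicator (Ioo 0 l) (fun s => s ^ (α - 1))

lemma kapp_integrable {α l : ℝ} (hα : 0 < α) (hl : 0 < l) : Integrable (kapp α l) := by
  rw [kapp, integrable_indicator_iff measurableSet_Ioo]
  have := (intervalIntegral.intervalIntegrable_rpow' (a := 0) (b := l)
    (r := α - 1) (by linarith))
  rw [intervalIntegrable_iff_integrableOn_Ioo_of_le hl.le] at this
  exact this

lemma kapp_nonneg (α l s : ℝ) : 0 ≤ kapp α l s := by
  apply indicator_nonneg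
  intro x hx
  exact Real.rpow_nonneg hx.1.le _

lemma conv_kapp {α l a t : ℝ} {v : ℝ → ℝ} (hat : a ≤ t) (htl : t - a < l)
    (hv : ∀ s ≤ a, v s = 0) :
    (convolution (kapp α l) v (ContinuousLinearMap.mul ℝ ℝ) volume) t =
      ∫ s in a..t, (t - s) ^ (α - 1) * v s := by
  rw [convolution_mul_swap, intervalIntegral.integral_of_le hat, integral_Ioc_eq_integral_Ioo,
    ← integral_indicator measurableSet_Ioo]
  congr 1
  ext s
  simp only [indicator, kapp, mem_Ioo]
  by_cases h1 : s ≤ a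
  · rw [hv s h1]; simp
  by_cases h2 : s < t
  · rw [if_pos ⟨by linarith, by linarith⟩, if_pos ⟨by linarith, h2⟩]
  · rw [if_neg (by intro h; linarith [h.1]), if_neg (by intro h; exact h2 h.2), zero_mul]

lemma conv_kapp_zero {α l a t : ℝ} {v : ℝ → ℝ} (hat : t ≤ a)
    (hv : ∀ s ≤ a, v s = 0) :
    (convolution (kapp α l) v (ContinuousLinearMap.mul ℝ ℝ) volume) t = 0 := by
  rw [convolution_mul_swap]
  apply integral_eq_zero_of_ae
  refine Filter.Eventually.of_forall fun s => ?_
  simp only [indicator, kapp, mem_Ioo, Pi.zero_apply]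
  by_cases h1 : s ≤ a
  · rw [hv s h1]; simp
  · rw [if_neg (by intro h; linarith [h.1]), zero_mul]

lemma semigroup {a T M α : ℝ} (hα : 0 < α) (hα1 : α < 1) {h : ℝ → ℝ} (H : EssB a T M h)
    {t : ℝ} (hat : a ≤ t) (htT : t ≤ T) :
    fracJ a (1 - α) (fracJ a α h) t = ∫ s in a..t, h s := by
  have hα' : 0 < 1 - α := by linarith
  have hΓ := Real.Gamma_pos_of_pos hα
  have hΓ' := Real.Gamma_pos_of_pos hα'
  have haT := hat.trans htT
  set l := T - a + 1 with hl
  have hl0 : 0 < l := by linarith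
  set h0 : ℝ → ℝ := indicator (Ioc a T) h with hh0
  have h0z : ∀ s ≤ a, h0 s = 0 := by
    intro s hs
    rw [hh0, indicator_of_notMem]
    simp [hs]
  have h0i : Integrable h0 := by
    rw [hh0, integrable_indicator_iff measurableSet_Ioc]
    have := H.integrableOn haT
    rwa [intervalIntegrable_iff_integrableOn_Ioc_of_le haT] at this
  have h0b : ∀ᵐ s, ‖h0 s‖ ≤ |M| := by
    filter_upwards [(ae_restrict_iff' measurableSet_Ioc).1 H.2] with s hs
    by_cases hm : s ∈ Ioc a T
    · rw [hh0, indicator_of_mem hm]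
      exact (hs hm).trans (le_abs_self M)
    · rw [hh0, indicator_of_notMem hm]; simp
  have k1 := kapp_integrable (l := l) hα hl0
  have k2 := kapp_integrable (l := l) hα' hl0
  have assoc := convolution_assoc (μ := volume) (ν := volume) (f := kapp (1 - α) l)
    (g := kapp α l) (k := h0)
    (ContinuousLinearMap.mul ℝ ℝ) (ContinuousLinearMap.mul ℝ ℝ) (ContinuousLinearMap.mul ℝ ℝ)
    (ContinuousLinearMap.mul ℝ ℝ) (by intro x y z; simp [mul_assoc]) (x₀ := t)
    k2.aestronglyMeasurable k1.aestronglyMeasurable h0i.aestronglyMeasurable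
    (k2.ae_convolution_exists _ k1) (k1.norm.ae_convolution_exists _ h0i.norm) (by
      rw [ConvolutionExistsAt]
      simp only [ContinuousLinearMap.mul_apply']
      refine Integrable.mul_bdd (c := |M| * ∫ s, kapp α l s) k2.norm
        (((k1.norm.integrable_convolution _ h0i.norm).comp_sub_left t).aestronglyMeasurable)
        (Filter.Eventually.of_forall fun s => ?_)
      rw [convolution_mul_swap]
      refine (norm_integral_le_of_norm_le
        (g := fun u => |M| * kapp α l ((t - s) - u)) ((k1.comp_sub_left (t - s)).const_mul _)
        ?_).trans_eq ?_
      · filter_upwards [h0b] with u hu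
        rw [norm_mul, norm_norm, norm_norm, mul_comm, Real.norm_of_nonneg (kapp_nonneg _ _ _)]
        exact mul_le_mul_of_nonneg_right hu (kapp_nonneg _ _ _)
      · rw [integral_const_mul, integral_sub_left_eq_self (kapp α l)])
  -- right side
  rw [conv_kapp hat (by linarith) (fun s hs => conv_kapp_zero hs h0z)] at assoc
  have eR : ∫ s in a..t, (t - s) ^ ((1 - α) - 1) *
        (convolution (kapp α l) h0 (ContinuousLinearMap.mul ℝ ℝ) volume) s =
      Real.Gamma α * ∫ s in a..t, (t - s) ^ ((1 - α) - 1) * fracJ a α h s := by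
    rw [← intervalIntegral.integral_const_mul]
    apply intervalIntegral.integral_congr
    intro s hs
    rw [uIcc_of_le hat] at hs
    simp only
    rw [conv_kapp hs.1 (by linarith [hs.2]) h0z, fracJ]
    have : ∫ u in a..s, (s - u) ^ (α - 1) * h0 u = ∫ u in a..s, (s - u) ^ (α - 1) * h u := by
      apply intervalIntegral.integral_congr_ae
      refine Filter.Eventually.of_forall fun u hu => ?_
      rw [uIoc_of_le hs.1] at hu
      rw [hh0, indicator_of_mem]
      exact ⟨hu.1, by linarith [hu.2, hs.2]⟩
    rw [this]
    field_simp
  rw [eR] at assoc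
  -- left side
  have kz : ∀ s ≤ (0:ℝ), kapp α l s = 0 := by
    intro s hs
    rw [kapp, indicator_of_notMem]
    simp [hs]
  have eL : (convolution (convolution (kapp (1 - α) l) (kapp α l) (ContinuousLinearMap.mul ℝ ℝ)
      volume) h0 (ContinuousLinearMap.mul ℝ ℝ) volume) t =
      (Real.Gamma α * Real.Gamma (1 - α)) * ∫ s in a..t, h s := by
    rw [convolution_mul_swap, ← intervalIntegral.integral_const_mul,
      intervalIntegral.integral_of_le hat, integral_Ioc_eq_integral_Ioo,
      ← integral_indicator measurableSet_Ioo]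
    congr 1
    ext s
    by_cases h1 : s ≤ a
    · rw [h0z s h1, indicator_of_notMem (by simp [h1])]; simp
    by_cases h2 : s < t
    · rw [indicator_of_mem (by simp at h1 ⊢; exact ⟨h1, h2⟩)]
      rw [conv_kapp (a := 0) (by linarith) (by linarith) kz, hh0,
        indicator_of_mem (show s ∈ Ioc a T from ⟨by linarith, by linarith⟩), ← beta_real hα hα1 (sub_pos.2 h2)]
      congr 1
      apply intervalIntegral.integral_congr_ae
      refine Filter.Eventually.of_forall fun u hu => ?_
      rw [uIoc_of_le (by linarith)] at hu
      rw [kapp, indicator_of_mem]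
      exact ⟨hu.1, by linarith [hu.2]⟩
    · rw [indicator_of_notMem (by simp at h2 ⊢; intro; exact h2),
        conv_kapp_zero (a := 0) (by linarith) kz, zero_mul]
  rw [eL, mul_assoc] at assoc
  have := mul_left_cancel₀ hΓ.ne' assoc
  rw [fracJ, ← this]
  field_simp

lemma rlInt_eq {a β : ℝ} (hβ : β ≠ 0) (g : ℝ → ℝ) (t : ℝ) : rlInt a β g t = fracJ a β g t := by
  rw [rlInt, if_neg hβ, fracJ]

/-- Integral equation implies the differential equation. -/
lemma lemB {a T M α : ℝ} (hα : 0 < α) (hα1 : α ≤ 1) {h g : ℝ → ℝ} (H : EssB a T M h)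
    (hg : ∀ t ∈ Icc a T, g t = fracJ a α h t) {t : ℝ} (ht : t ∈ Icc a T) :
    rlInt a (1 - α) g t = ∫ s in a..t, h s := by
  rcases hα1.eq_or_lt with rfl | hlt
  · rw [rlInt, if_pos (sub_self _), hg t ht, fracJ]
    simp
  · rw [rlInt_eq (by linarith), ← semigroup hα hlt H ht.1 ht.2]
    apply fracJ_congr ht.1
    filter_upwards [ae_restrict_mem measurableSet_Ioc] with s hs
    exact hg s ⟨hs.1.le, hs.2.trans ht.2⟩

lemma fracJ_self (a α : ℝ) (h : ℝ → ℝ) : fracJ a α h a = 0 := by simp [fracJ]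

lemma zero_of_integral_zero {a T : ℝ} (haT : a < T) {w : ℝ → ℝ} (hw : ContinuousOn w (Icc a T))
    (h0 : ∀ t ∈ Icc a T, ∫ s in a..t, w s = 0) : ∀ t ∈ Icc a T, w t = 0 := by
  have hio : ∀ t ∈ Ioo a T, w t = 0 := by
    intro t ht
    have hn : Icc a T ∈ nhds t := Icc_mem_nhds ht.1 ht.2
    have h1 : HasDerivAt (fun u => ∫ s in a..u, w s) (w t) t := by
      apply intervalIntegral.integral_hasDerivAt_right
      · apply ContinuousOn.intervalIntegrable
        rw [uIcc_of_le ht.1.le]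
        exact hw.mono (Icc_subset_Icc_right ht.2.le)
      · exact hw.stronglyMeasurableAtFilter_nhdsWithin measurableSet_Icc t |>.filter_mono
          (by rw [nhdsWithin_eq_nhds.2 hn])
      · exact hw.continuousAt hn
    have h2 : HasDerivAt (fun u => ∫ s in a..u, w s) 0 t := by
      apply (hasDerivAt_const t (0:ℝ)).congr_of_eventuallyEq
      filter_upwards [hn] with u hu
      exact h0 u hu
    exact h1.unique h2
  have := Measure.eqOn_Icc_of_ae_eq volume haT.ne (f := w) (g := fun _ => 0) (by
    have h3 : ∀ᵐ s ∂(volume.restrict (Ioo a T)), w s = 0 := by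
      filter_upwards [ae_restrict_mem measurableSet_Ioo] with s hs using hio s hs
    rwa [Measure.restrict_congr_set Ioo_ae_eq_Icc] at h3) hw continuousOn_const
  exact this

lemma integral_cont {a T M : ℝ} {h : ℝ → ℝ} (H : EssB a T M h) (haT : a ≤ T) :
    ContinuousOn (fun t => ∫ s in a..t, h s) (Icc a T) := by
  have := H.integrableOn haT
  rw [intervalIntegrable_iff_integrableOn_Icc_of_le haT] at this
  exact intervalIntegral.continuousOn_primitive_interval (by rwa [uIcc_of_le haT]) |>.mono
    (by rw [uIcc_of_le haT])

/-- The differential equation implies the integral equation. -/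
lemma lemA {a T M α c : ℝ} (haT : a < T) (hα : 0 < α) (hα1 : α ≤ 1) {h g : ℝ → ℝ}
    (H : EssB a T M h) (hg : ContinuousOn g (Icc a T)) (hga : g a = 0)
    (hc : ∀ᵐ t ∂(volume.restrict (Icc a T)), rlInt a (1 - α) g t = c + ∫ s in a..t, h s) :
    ∀ t ∈ Icc a T, g t = fracJ a α h t := by
  have hai : a ∈ Icc a T := ⟨le_rfl, haT.le⟩
  rcases hα1.eq_or_lt with rfl | hlt
  · have e1 : ∀ t ∈ Icc a T, g t = c + ∫ s in a..t, h s := by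
      refine Measure.eqOn_Icc_of_ae_eq volume haT.ne ?_ hg
        (continuousOn_const.add (integral_cont H haT.le))
      filter_upwards [hc] with t ht
      rwa [rlInt, if_pos (sub_self _)] at ht
    have hc0 : c = 0 := by
      have := e1 a hai
      simpa [hga] using this.symm
    intro t ht
    rw [e1 t ht, hc0, fracJ]
    simp
  · have hα' : 0 < 1 - α := by linarith
    have hjc := fracJ_cont hα hα1 H
    set w : ℝ → ℝ := fun t => g t - fracJ a α h t with hw
    have hwc : ContinuousOn w (Icc a T) := hg.sub hjc
    obtain ⟨N, hN⟩ := EssB_of_cont hwc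
    obtain ⟨N1, hN1⟩ := EssB_of_cont hg
    obtain ⟨N2, hN2⟩ := EssB_of_cont hjc
    have e1 : ∀ t ∈ Icc a T, fracJ a (1 - α) w t = c := by
      refine Measure.eqOn_Icc_of_ae_eq volume haT.ne ?_
        (fracJ_cont hα' (by linarith) hN) continuousOn_const
      filter_upwards [hc, ae_restrict_mem measurableSet_Icc] with t ht htm
      rw [hw, fracJ_sub hα' htm.1 (hN1.mono htm.2) (hN2.mono htm.2),
        semigroup hα hlt H htm.1 htm.2, ← rlInt_eq hα'.ne', ht]
      ring
    have hc0 : c = 0 := by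
      rw [← e1 a hai, fracJ_self]
    have e2 : ∀ t ∈ Icc a T, ∫ s in a..t, w s = 0 := by
      intro t ht
      rw [← semigroup hα' (by linarith) hN ht.1 ht.2]
      have : fracJ a (1 - (1 - α)) (fracJ a (1 - α) w) t =
          fracJ a (1 - (1 - α)) (fun _ => 0) t := by
        apply fracJ_congr ht.1
        filter_upwards [ae_restrict_mem measurableSet_Ioc] with s hs
        rw [e1 s ⟨hs.1.le, hs.2.trans ht.2⟩, hc0]
      rw [this]
      simp [fracJ]
    intro t ht
    have := zero_of_integral_zero haT hwc e2 t ht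
    rw [hw] at this
    linarith

lemma carath_meas {m : ℕ} {Ω : Set (EuclideanSpace ℝ (Fin m))} {μ : Measure ℝ}
    {F : EuclideanSpace ℝ (Fin m) → ℝ → EuclideanSpace ℝ (Fin m)}
    (hΩne : Ω.Nonempty)
    (hFmeas : ∀ x ∈ Ω, AEStronglyMeasurable (fun t => F x t) μ)
    (hFcont : ∀ᵐ t ∂μ, ContinuousOn (fun x => F x t) Ω)
    {u : ℝ → EuclideanSpace ℝ (Fin m)} (hu : AEMeasurable u μ) (huΩ : ∀ᵐ t ∂μ, u t ∈ Ω) :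
    AEStronglyMeasurable (fun t => F (u t) t) μ := by
  obtain ⟨y0, hy0⟩ := hΩne
  have simple : ∀ φ : SimpleFunc ℝ (EuclideanSpace ℝ (Fin m)), (∀ t, φ t ∈ Ω) →
      AEStronglyMeasurable (fun t => F (φ t) t) μ := by
    intro φ hφ
    have e : (fun t => F (φ t) t) =
        fun t => ∑ y ∈ φ.range, indicator (φ ⁻¹' {y}) (fun t => F y t) t := by
      ext1 t
      rw [Finset.sum_eq_single (φ t)]
      · rw [indicator_of_mem (by simp)]
      · intro y _ hy
        rw [indicator_of_notMem]
        simpa using hy.symm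
      · intro h
        exact absurd (φ.mem_range_self t) h
    rw [e]
    refine Finset.aestronglyMeasurable_fun_sum _ fun y hy => ?_
    obtain ⟨t, rfl⟩ := SimpleFunc.mem_range.1 hy
    exact (hFmeas _ (hφ t)).indicator (φ.measurableSet_fiber _)
  set v := hu.mk u with hv
  have hvm : Measurable v := hu.measurable_mk
  have hae : u =ᵐ[μ] v := hu.ae_eq_mk
  refine aestronglyMeasurable_of_tendsto_ae Filter.atTop
    (f := fun n t => F (SimpleFunc.approxOn v hvm Ω y0 hy0 n t) t)
    (fun n => simple _ fun t => SimpleFunc.approxOn_mem hvm hy0 n t) ?_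
  filter_upwards [hFcont, huΩ, hae] with t hc hm he
  have hv' : v t ∈ Ω := he ▸ hm
  have h1 := SimpleFunc.tendsto_approxOn hvm hy0 (subset_closure hv')
  rw [he]
  refine (hc (v t) hv').tendsto.comp (tendsto_nhdsWithin_iff.2 ⟨h1, ?_⟩)
  exact Filter.Eventually.of_forall fun n => SimpleFunc.approxOn_mem hvm hy0 n t

lemma ae_forall_le {X : Type*} [TopologicalSpace X] [TopologicalSpace.SeparableSpace X]
    {μ : Measure ℝ} {G : X → ℝ → ℝ} {g : X → ℝ} (hg : Continuous g)
    (hc : ∀ᵐ t ∂μ, Continuous (fun x => G x t))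
    (hle : ∀ x, ∀ᵐ t ∂μ, G x t ≤ g x) : ∀ᵐ t ∂μ, ∀ x, G x t ≤ g x := by
  obtain ⟨s, hs, hd⟩ := TopologicalSpace.exists_countable_dense X
  have h1 : ∀ᵐ t ∂μ, ∀ x ∈ s, G x t ≤ g x := (ae_ball_iff hs).2 fun x _ => hle x
  filter_upwards [hc, h1] with t hct ht x
  have hcl : IsClosed {x | G x t ≤ g x} := isClosed_le hct hg
  have : closure s ⊆ {x | G x t ≤ g x} := closure_minimal ht hcl
  exact this (hd x)

lemma eucl_norm_le {m : ℕ} (x : EuclideanSpace ℝ (Fin m)) {c : ℝ} (hc : 0 ≤ c)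
    (h : ∀ i, |x i| ≤ c) : ‖x‖ ≤ m * c := by
  rw [EuclideanSpace.norm_eq]
  apply Real.sqrt_le_iff.2
  refine ⟨by positivity, ?_⟩
  calc ∑ i, ‖x i‖ ^ 2 ≤ ∑ _i : Fin m, c ^ 2 := by
        apply Finset.sum_le_sum
        intro i _
        have := h i
        rw [Real.norm_eq_abs]
        gcongr
    _ = m * c ^ 2 := by simp
    _ ≤ (m * c) ^ 2 := by
        rw [mul_pow]
        gcongr
        have : m ≤ m ^ 2 := Nat.le_self_pow (by norm_num) m
        exact_mod_cast this

lemma cont_of_coord {m : ℕ} {s : Set ℝ} {u : ℝ → EuclideanSpace ℝ (Fin m)}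
    (h : ∀ i, ContinuousOn (fun t => u t i) s) : ContinuousOn u s := by
  have h1 : ContinuousOn (fun t => (fun i => u t i : Fin m → ℝ)) s := continuousOn_pi.2 h
  exact (PiLp.continuous_toLp 2 (fun _ : Fin m => ℝ)).comp_continuousOn h1

lemma coord_le {m : ℕ} (x : EuclideanSpace ℝ (Fin m)) (i : Fin m) : |x i| ≤ ‖x‖ := by
  simpa using PiLp.norm_apply_le x i

lemma essB_comp {m : ℕ} {Ω K : Set (EuclideanSpace ℝ (Fin m))} {a T M : ℝ}
    {F : EuclideanSpace ℝ (Fin m) → ℝ → EuclideanSpace ℝ (Fin m)}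
    (hΩne : Ω.Nonempty) (hKΩ : K ⊆ Ω)
    (hFmeas : ∀ x ∈ Ω, AEStronglyMeasurable (fun t => F x t) (volume.restrict (Ioc a T)))
    (hFcont : ∀ᵐ t ∂(volume.restrict (Ioc a T)), ContinuousOn (fun x => F x t) Ω)
    (hM : ∀ᵐ t ∂(volume.restrict (Ioc a T)), ∀ x ∈ K, ‖F x t‖ ≤ M)
    {u : ℝ → EuclideanSpace ℝ (Fin m)} (hu : AEMeasurable u (volume.restrict (Ioc a T)))
    (huK : ∀ᵐ t ∂(volume.restrict (Ioc a T)), u t ∈ K) (i : Fin m) :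
    EssB a T M (fun t => F (u t) t i) := by
  refine ⟨?_, ?_⟩
  · have := carath_meas hΩne hFmeas hFcont hu (huK.mono fun t ht => hKΩ ht)
    exact (EuclideanSpace.proj (𝕜 := ℝ) i).continuous.comp_aestronglyMeasurable this
  · filter_upwards [hM, huK] with t h1 h2
    exact (coord_le _ i).trans (h1 _ h2)

lemma isInterval_Icc {a T : ℝ} (h : a < T) : IsIntervalFrom a (Icc a T) :=
  ⟨⟨le_rfl, h.le⟩, fun _ hx => hx.1, by rw [interior_Icc]; exact nonempty_Ioo.2 h,
    ordConnected_Icc⟩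

lemma sol_of_integral {m : ℕ} {a T M : ℝ} {If : Set ℝ} {Ω : Set (EuclideanSpace ℝ (Fin m))}
    {α : Fin m → ℝ} (hα : ∀ i, 0 < α i ∧ α i ≤ 1) {qa : EuclideanSpace ℝ (Fin m)}
    {F : EuclideanSpace ℝ (Fin m) → ℝ → EuclideanSpace ℝ (Fin m)}
    {q : ℝ → EuclideanSpace ℝ (Fin m)} (haT : a < T) (hIf : Icc a T ⊆ If)
    (hΩ : ∀ t ∈ Icc a T, q t ∈ Ω)
    (hE : ∀ i, EssB a T M (fun t => F (q t) t i))
    (heq : ∀ i, ∀ t ∈ Icc a T, q t i - qa i = fracJ a (α i) (fun t => F (q t) t i) t) :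
    IsCaputoLocalSol a If Ω α qa F q (Icc a T) := by
  refine ⟨isInterval_Icc haT, hIf, ?_, hΩ, ?_, ?_⟩
  · apply cont_of_coord
    intro i
    have h1 := (fracJ_cont (hα i).1 (hα i).2 (hE i)).add (continuousOn_const (c := qa i))
    refine h1.congr fun t ht => ?_
    rw [Pi.add_apply, ← heq i t ht]
    ring
  · ext i
    have := heq i a ⟨le_rfl, haT.le⟩
    rw [fracJ_self] at this
    linarith
  · intro i
    refine ⟨0, fun t => F (q t) t i, ?_, ?_, ?_⟩
    · intro b hb
      have := ((hE i).mono hb.2).integrableOn hb.1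
      rwa [intervalIntegrable_iff_integrableOn_Icc_of_le hb.1] at this
    · filter_upwards [ae_restrict_mem measurableSet_Icc] with t ht
      rw [zero_add]
      exact lemB (hα i).1 (hα i).2 (hE i) (heq i) ht
    · exact Filter.Eventually.of_forall fun t => rfl

lemma ae_bound_K {m : ℕ} {Ω K : Set (EuclideanSpace ℝ (Fin m))} {M : ℝ} {μ : Measure ℝ}
    {F : EuclideanSpace ℝ (Fin m) → ℝ → EuclideanSpace ℝ (Fin m)} (hKΩ : K ⊆ Ω)
    (hFcont : ∀ᵐ t ∂μ, ContinuousOn (fun x => F x t) Ω)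
    (hM : ∀ x ∈ K, ∀ᵐ t ∂μ, ‖F x t‖ ≤ M) :
    ∀ᵐ t ∂μ, ∀ x ∈ K, ‖F x t‖ ≤ M := by
  have := ae_forall_le (X := K) (μ := μ) (G := fun x t => ‖F x t‖) (g := fun _ => M)
    continuous_const (hFcont.mono fun t ht => ((ht.mono hKΩ).domRestrict).norm)
    (fun x => hM x x.2)
  exact this.mono fun t ht x hx => ht ⟨x, hx⟩

lemma ae_lip_K {m : ℕ} {Ω K : Set (EuclideanSpace ℝ (Fin m))} {L : ℝ} {μ : Measure ℝ}
    {F : EuclideanSpace ℝ (Fin m) → ℝ → EuclideanSpace ℝ (Fin m)} (hKΩ : K ⊆ Ω)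
    (hFcont : ∀ᵐ t ∂μ, ContinuousOn (fun x => F x t) Ω)
    (hL : ∀ x₁ ∈ K, ∀ x₂ ∈ K, ∀ᵐ t ∂μ, ‖F x₂ t - F x₁ t‖ ≤ L * ‖x₂ - x₁‖) :
    ∀ᵐ t ∂μ, ∀ x₁ ∈ K, ∀ x₂ ∈ K, ‖F x₂ t - F x₁ t‖ ≤ L * ‖x₂ - x₁‖ := by
  have := ae_forall_le (X := K × K) (μ := μ) (G := fun x t => ‖F x.2 t - F x.1 t‖)
    (g := fun x => L * ‖(x.2 : EuclideanSpace ℝ (Fin m)) - x.1‖)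
    (by fun_prop) (hFcont.mono fun t ht => by
      have h1 : Continuous (fun x : K => F x t) := (ht.mono hKΩ).domRestrict
      exact ((h1.comp continuous_snd).sub (h1.comp continuous_fst)).norm)
    (fun x => hL _ x.1.2 _ x.2.2)
  exact this.mono fun t ht x hx y hy => ht ⟨⟨x, hx⟩, ⟨y, hy⟩⟩

lemma integral_of_sol {m : ℕ} {a : ℝ} {If I : Set ℝ} {Ω : Set (EuclideanSpace ℝ (Fin m))}
    {α : Fin m → ℝ} (hα : ∀ i, 0 < α i ∧ α i ≤ 1) {qa : EuclideanSpace ℝ (Fin m)}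
    {F : EuclideanSpace ℝ (Fin m) → ℝ → EuclideanSpace ℝ (Fin m)}
    {q : ℝ → EuclideanSpace ℝ (Fin m)}
    (haI : a ∈ If)
    (hFmeas : ∀ x ∈ Ω, AEStronglyMeasurable (fun t => F x t) (volume.restrict If))
    (hFcont : ∀ᵐ t ∂(volume.restrict If), ContinuousOn (fun x => F x t) Ω)
    (hbdd : ∀ K : Set (EuclideanSpace ℝ (Fin m)), K ⊆ Ω → IsCompact K →
      ∀ c ∈ If, ∀ d ∈ If, c ≤ d → ∃ M : ℝ, 0 ≤ M ∧ ∀ x ∈ K,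
        ∀ᵐ t ∂(volume.restrict (Set.Icc c d)), ‖F x t‖ ≤ M)
    (hsol : IsCaputoLocalSol a If Ω α qa F q I) {t : ℝ} (htI : t ∈ I) (hat : a < t)
    (i : Fin m) :
    ∀ s ∈ Icc a t, q s i - qa i = fracJ a (α i) (fun t => F (q t) t i) s := by
  obtain ⟨⟨haI', hIa, hint, hord⟩, hIIf, hqc, hqΩ, hqa, hode⟩ := hsol
  have hsub : Icc a t ⊆ I := hord.out haI' htI
  have hsubf : Icc a t ⊆ If := hsub.trans hIIf
  have hqc' := hqc.mono hsub
  have hKc : IsCompact (q '' Icc a t) := isCompact_Icc.image_of_continuousOn hqc'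
  have hKΩ : q '' Icc a t ⊆ Ω := by
    rintro _ ⟨s, hs, rfl⟩
    exact hqΩ s (hsub hs)
  obtain ⟨M, hM0, hM⟩ := hbdd _ hKΩ hKc a haI t (hIIf htI) hat.le
  have hsubo : Ioc a t ⊆ If := Ioc_subset_Icc_self.trans hsubf
  have hFcont' := ae_restrict_of_ae_restrict_of_subset hsubo hFcont
  have hE : EssB a t M (fun t => F (q t) t i) := by
    refine essB_comp ⟨q a, hqΩ a haI'⟩ hKΩ
      (fun x hx => (hFmeas x hx).mono_measure (Measure.restrict_mono hsubo le_rfl)) hFcont'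
      (ae_bound_K hKΩ hFcont' fun x hx =>
        ae_restrict_of_ae_restrict_of_subset Ioc_subset_Icc_self (hM x hx))
      ((hqc'.mono Ioc_subset_Icc_self).aemeasurable measurableSet_Ioc) ?_ i
    filter_upwards [ae_restrict_mem measurableSet_Ioc] with s hs
    exact ⟨s, Ioc_subset_Icc_self hs, rfl⟩
  obtain ⟨c, h, hhi, hrl, hF⟩ := hode i
  have hF' := ae_restrict_of_ae_restrict_of_subset hsub hF
  refine lemA (g := fun s => q s i - qa i) (c := c) hat (hα i).1 (hα i).2 hE ?_ ?_ ?_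
  · exact ((EuclideanSpace.proj (𝕜 := ℝ) i).continuous.comp_continuousOn hqc').sub
      continuousOn_const
  · simp [hqa]
  · filter_upwards [ae_restrict_of_ae_restrict_of_subset hsub hrl,
      ae_restrict_mem measurableSet_Icc] with s hs hsm
    rw [hs]
    congr 1
    apply intervalIntegral.integral_congr_ae
    rw [uIoc_of_le hsm.1]
    filter_upwards [(ae_restrict_iff' measurableSet_Icc).1 hF'] with u hu hum
    exact hu ⟨hum.1.le, hum.2.trans hsm.2⟩

lemma small_const {m : ℕ} {α : Fin m → ℝ} (hα : ∀ i, 0 < α i ∧ α i ≤ 1) {η D : ℝ}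
    (hη : 0 < η) (hD : 0 < D) :
    ∃ ε, 0 < ε ∧ ε ≤ D ∧ ∀ i, ∀ r, 0 ≤ r → r ≤ ε →
      1 / Real.Gamma (α i) * (r ^ α i / α i) ≤ η := by
  have key : ∀ i, ∀ᶠ ε in nhdsWithin (0:ℝ) (Ioi 0),
      1 / Real.Gamma (α i) * (ε ^ α i / α i) < η := by
    intro i
    have hc : Continuous (fun ε : ℝ => 1 / Real.Gamma (α i) * (ε ^ α i / α i)) := by
      have := Real.continuous_rpow_const (hα i).1.le
      fun_prop
    have h2 := hc.tendsto 0
    simp only [Real.zero_rpow (hα i).1.ne', zero_div, mul_zero] at h2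
    exact (h2.mono_left nhdsWithin_le_nhds).eventually (gt_mem_nhds hη)
  have h3 : ∀ᶠ ε in nhdsWithin (0:ℝ) (Ioi 0), ε ∈ Ioc 0 D := Ioc_mem_nhdsGT hD
  obtain ⟨ε, h4, h5⟩ := ((Filter.eventually_all.2 key).and h3).exists
  refine ⟨ε, h5.1, h5.2, fun i r hr hrε => le_trans ?_ (h4 i).le⟩
  have hΓ := Real.Gamma_pos_of_pos (hα i).1
  have := (hα i).1
  gcongr

/-- A solution on a closed interval that is not all of `If` can be extended. -/
lemma extend_closed {m : ℕ} {a b d : ℝ} {If : Set ℝ} {Ω : Set (EuclideanSpace ℝ (Fin m))}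
    {α : Fin m → ℝ} (hα : ∀ i, 0 < α i ∧ α i ≤ 1) {qa : EuclideanSpace ℝ (Fin m)}
    {F : EuclideanSpace ℝ (Fin m) → ℝ → EuclideanSpace ℝ (Fin m)}
    {q : ℝ → EuclideanSpace ℝ (Fin m)}
    (haI : a ∈ If) (hIord : If.OrdConnected)
    (hFmeas : ∀ x ∈ Ω, AEStronglyMeasurable (fun t => F x t) (volume.restrict If))
    (hFcont : ∀ᵐ t ∂(volume.restrict If), ContinuousOn (fun x => F x t) Ω)
    (hbdd : ∀ K : Set (EuclideanSpace ℝ (Fin m)), K ⊆ Ω → IsCompact K →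
      ∀ c ∈ If, ∀ d ∈ If, c ≤ d → ∃ M : ℝ, 0 ≤ M ∧ ∀ x ∈ K,
        ∀ᵐ t ∂(volume.restrict (Set.Icc c d)), ‖F x t‖ ≤ M)
    (hlip : ∀ x ∈ Ω, ∀ t ∈ If, ∃ R > (0:ℝ), ∃ δ > (0:ℝ), ∃ L : ℝ, 0 ≤ L ∧
      Metric.closedBall x R ⊆ Ω ∧
      ∀ x₁ ∈ Metric.closedBall x R, ∀ x₂ ∈ Metric.closedBall x R,
        ∀ᵐ τ ∂(volume.restrict (Set.Icc (t - δ) (t + δ) ∩ If)),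
          ‖F x₂ τ - F x₁ τ‖ ≤ L * ‖x₂ - x₁‖)
    (hab : a < b) (hbd : b < d) (hd : d ∈ If)
    (hsol : IsCaputoLocalSol a If Ω α qa F q (Icc a b)) :
    ∃ T q', b < T ∧ IsCaputoLocalSol a If Ω α qa F q' (Icc a T) ∧ EqOn q' q (Icc a b) := by
  have hint := integral_of_sol hα haI hFmeas hFcont hbdd hsol (t := b) ⟨hab.le, le_rfl⟩ hab
  obtain ⟨-, hIIf, hqc, hqΩ, hqa, -⟩ := hsol
  have hbI : b ∈ Icc a b := ⟨hab.le, le_rfl⟩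
  obtain ⟨R, hR, δ, hδ, L, hL0, hBΩ, hL⟩ := hlip (q b) (hqΩ b hbI) b (hIIf hbI)
  set B := Metric.closedBall (q b) R with hB
  set K := q '' Icc a b ∪ B with hK
  have hKc : IsCompact K :=
    (isCompact_Icc.image_of_continuousOn hqc).union (isCompact_closedBall _ _)
  have hKΩ : K ⊆ Ω := by
    rintro x (⟨s, hs, rfl⟩ | hx)
    · exact hqΩ s hs
    · exact hBΩ hx
  have hΩne : Ω.Nonempty := ⟨q b, hqΩ b hbI⟩
  obtain ⟨M, hM0, hM⟩ := hbdd K hKΩ hKc a haI d hd (hab.trans hbd).le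
  set η := min (R / (2 * M * m + 1)) (1 / (2 * L * m + 2)) with hη
  have hηpos : 0 < η := by
    apply lt_min <;> positivity
  have hη1 : m * (2 * M * η) ≤ R := by
    have h1 : η ≤ R / (2 * M * m + 1) := min_le_left _ _
    rw [le_div_iff₀ (by positivity)] at h1
    nlinarith
  have hη2 : m * (L * η) ≤ 1 / 2 := by
    have h1 : η ≤ 1 / (2 * L * m + 2) := min_le_right _ _
    rw [le_div_iff₀ (by positivity)] at h1
    nlinarith
  obtain ⟨ε, hε, hεD, hsmall⟩ := small_const hα hηpos (lt_min hδ (sub_pos.2 hbd))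
  have hεδ : ε ≤ δ := hεD.trans (min_le_left _ _)
  have hεd : ε ≤ d - b := hεD.trans (min_le_right _ _)
  set T := b + ε with hT
  have hbT : b < T := by linarith
  have haT : a < T := hab.trans hbT
  have hTd : T ≤ d := by linarith
  have hIcc : Icc a T ⊆ If := (Icc_subset_Icc_right hTd).trans (hIord.out haI hd)
  have hIoc : Ioc a T ⊆ If := Ioc_subset_Icc_self.trans hIcc
  have hFcont' := ae_restrict_of_ae_restrict_of_subset hIoc hFcont
  have hM' : ∀ᵐ t ∂(volume.restrict (Ioc a T)), ∀ x ∈ K, ‖F x t‖ ≤ M :=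
    ae_bound_K hKΩ hFcont' fun x hx => ae_restrict_of_ae_restrict_of_subset
      (Ioc_subset_Icc_self.trans (Icc_subset_Icc_right hTd)) (hM x hx)
  have hL' : ∀ᵐ t ∂(volume.restrict (Icc (b - δ) (b + δ) ∩ If)), ∀ x₁ ∈ B, ∀ x₂ ∈ B,
      ‖F x₂ t - F x₁ t‖ ≤ L * ‖x₂ - x₁‖ :=
    ae_lip_K hBΩ (ae_restrict_of_ae_restrict_of_subset inter_subset_right hFcont) hL
  have hL'' : ∀ᵐ t ∂(volume.restrict (Ioc b T)), ∀ x₁ ∈ B, ∀ x₂ ∈ B,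
      ‖F x₂ t - F x₁ t‖ ≤ L * ‖x₂ - x₁‖ := by
    refine ae_restrict_of_ae_restrict_of_subset ?_ hL'
    intro s hs
    exact ⟨⟨by linarith [hs.1], by linarith [hs.2]⟩, hIoc ⟨hab.trans hs.1, hs.2⟩⟩
  -- the glued function
  set qe : ℝ → EuclideanSpace ℝ (Fin m) := IccExtend hab.le (domRestrict (Icc a b) q) with hqe
  have hqec : Continuous qe := (continuousOn_iff_continuous_domRestrict.1 hqc).Icc_extend'
  have hqeq : ∀ s ∈ Icc a b, qe s = q s := by
    intro s hs
    rw [hqe, IccExtend_of_mem _ _ hs]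
    rfl
  let S : Set C(Icc b T, EuclideanSpace ℝ (Fin m)) := {p | ∀ t, p t ∈ B}
  have hScl : IsClosed S := by
    have : S = ⋂ t, (fun p : C(Icc b T, EuclideanSpace ℝ (Fin m)) => p t) ⁻¹' B := by
      ext p; simp [S]
    rw [this]
    exact isClosed_iInter fun t =>
      Metric.isClosed_closedBall.preimage (continuous_eval_const t)
  let u : S → ℝ → EuclideanSpace ℝ (Fin m) :=
    fun p s => if s ≤ b then qe s else IccExtend hbT.le p.1 s
  have hum : ∀ p, Measurable (u p) := fun p =>
    Measurable.ite measurableSet_Iic hqec.measurable (p.1.continuous.Icc_extend').measurable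
  have hu1 : ∀ p, ∀ s ∈ Icc a b, u p s = q s := by
    intro p s hs
    simp only [u]
    rw [if_pos hs.2, hqeq s hs]
  have hu2 : ∀ p, ∀ s, (hs : s ∈ Ioc b T) → u p s = p.1 ⟨s, hs.1.le, hs.2⟩ := by
    intro p s hs
    simp only [u]
    rw [if_neg (not_le.2 hs.1), IccExtend_of_mem _ _ ⟨hs.1.le, hs.2⟩]
  have huK : ∀ p, ∀ s ∈ Icc a T, u p s ∈ K := by
    intro p s hs
    by_cases h : s ≤ b
    · rw [hu1 p s ⟨hs.1, h⟩]
      exact Or.inl ⟨s, ⟨hs.1, h⟩, rfl⟩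
    · rw [hu2 p s ⟨not_le.1 h, hs.2⟩]
      exact Or.inr (p.2 _)
  have hE : ∀ p i, EssB a T M (fun t => F (u p t) t i) := by
    intro p i
    refine essB_comp hΩne hKΩ
      (fun x hx => (hFmeas x hx).mono_measure (Measure.restrict_mono hIoc le_rfl)) hFcont'
      hM' (hum p).aemeasurable ?_ i
    filter_upwards [ae_restrict_mem measurableSet_Ioc] with s hs
    exact huK p s (Ioc_subset_Icc_self hs)
  -- the integral operator agrees with `q` on `[a,b]`
  have hJq : ∀ p i, ∀ t ∈ Icc a b, qa i + fracJ a (α i) (fun t => F (u p t) t i) t = q t i := by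
    intro p i t ht
    have h1 := hint i t ht
    have h2 : fracJ a (α i) (fun t => F (u p t) t i) t = fracJ a (α i) (fun t => F (q t) t i) t := by
      apply fracJ_congr ht.1
      filter_upwards [ae_restrict_mem measurableSet_Ioc] with s hs
      rw [hu1 p s ⟨hs.1.le, hs.2.trans ht.2⟩]
    rw [h2, ← h1]
    ring
  have hΦex : ∀ p : S, ∃ p' : S, ∀ t i, p'.1 t i =
      qa i + fracJ a (α i) (fun t => F (u p t) t i) t := by
    intro p
    let g : ℝ → EuclideanSpace ℝ (Fin m) :=
      fun t => WithLp.toLp 2 (fun i => qa i + fracJ a (α i) (fun t => F (u p t) t i) t)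
    have hgi : ∀ t i, g t i = qa i + fracJ a (α i) (fun t => F (u p t) t i) t := fun t i => rfl
    have hgc : ContinuousOn g (Icc b T) := by
      apply cont_of_coord
      intro i
      exact (continuousOn_const.add (fracJ_cont (hα i).1 (hα i).2 (hE p i))).mono
        (Icc_subset_Icc_left hab.le)
    refine ⟨⟨⟨domRestrict (Icc b T) g, continuousOn_iff_continuous_domRestrict.1 hgc⟩, ?_⟩,
      fun t i => rfl⟩
    intro t
    change g t ∈ B
    rw [hB, mem_closedBall_iff_norm]
    refine (eucl_norm_le _ (c := 2 * M * η) (by positivity) fun i => ?_).trans hη1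
    have h1 := fracJ_holder (hα i).1 (hα i).2 hM0 hab.le t.2.1 ((hE p i).mono t.2.2)
    have h2 := hsmall i (t - b) (by linarith [t.2.1]) (by linarith [t.2.2])
    have h3 : (g t - q b) i = fracJ a (α i) (fun t => F (u p t) t i) t -
        fracJ a (α i) (fun t => F (u p t) t i) b := by
      rw [PiLp.sub_apply, hgi, ← hJq p i b hbI]
      ring
    rw [h3]
    refine h1.trans ?_
    calc _ = 2 * M * (1 / Real.Gamma (α i) * ((t - b) ^ α i / α i)) := by ring
      _ ≤ 2 * M * η := by gcongr
  choose Φ hΦ using hΦex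
  have : CompleteSpace S := hScl.completeSpace_coe
  have : Nonempty S := ⟨⟨ContinuousMap.const _ (q b), fun t => by
    simp [hB, hR.le]⟩⟩
  have hcontr : ContractingWith (1 / 2) Φ := by
    refine ⟨by norm_num, LipschitzWith.of_dist_le_mul fun p₁ p₂ => ?_⟩
    rw [Subtype.dist_eq, ContinuousMap.dist_le (by positivity)]
    intro t
    rw [dist_eq_norm]
    set D := dist p₁ p₂ with hD
    have hD0 : 0 ≤ D := dist_nonneg
    have hbound : ‖(Φ p₁).1 t - (Φ p₂).1 t‖ ≤ m * (L * D * η) := by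
      refine eucl_norm_le _ (by positivity) fun i => ?_
      rw [PiLp.sub_apply, hΦ, hΦ, add_sub_add_left_eq_sub,
        ← fracJ_sub (hα i).1 (hab.le.trans t.2.1) ((hE p₁ i).mono t.2.2) ((hE p₂ i).mono t.2.2)]
      have hEE : EssB a t (L * D) (fun s => F (u p₁ s) s i - F (u p₂ s) s i) := by
        refine ⟨((hE p₁ i).mono t.2.2).1.sub ((hE p₂ i).mono t.2.2).1, ?_⟩
        rw [ae_restrict_iff' measurableSet_Ioc]
        filter_upwards [(ae_restrict_iff' measurableSet_Ioc).1 hL''] with s hs hsm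
        by_cases hsb : s ≤ b
        · rw [hu1 p₁ s ⟨hsm.1.le, hsb⟩, hu1 p₂ s ⟨hsm.1.le, hsb⟩, sub_self, abs_zero]
          positivity
        · have hsm' : s ∈ Ioc b T := ⟨not_le.1 hsb, hsm.2.trans t.2.2⟩
          rw [hu2 p₁ s hsm', hu2 p₂ s hsm', ← PiLp.sub_apply]
          refine (coord_le _ i).trans ((hs hsm' _ (p₂.2 _) _ (p₁.2 _)).trans ?_)
          gcongr
          rw [← dist_eq_norm]
          exact ContinuousMap.dist_apply_le_dist _
      refine (fracJ_bound (hα i).1 hab.le t.2.1 hEE fun s hs => ?_).trans ?_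
      · rw [hu1 p₁ s ⟨hs.1.le, hs.2⟩, hu1 p₂ s ⟨hs.1.le, hs.2⟩, sub_self]
      · have h2 := hsmall i (t - b) (by linarith [t.2.1]) (by linarith [t.2.2])
        calc _ = L * D * (1 / Real.Gamma (α i) * ((t - b) ^ α i / α i)) := by ring
          _ ≤ L * D * η := by gcongr
    refine hbound.trans ?_
    calc m * (L * D * η) = (m * (L * η)) * D := by ring
      _ ≤ (1 / 2) * D := by gcongr
      _ = _ := by simp
  have hfix := hcontr.fixedPoint_isFixedPt
  set p := hcontr.fixedPoint with hp
  have hpt : ∀ i, ∀ t ∈ Icc a T, u p t i - qa i = fracJ a (α i) (fun t => F (u p t) t i) t := by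
    intro i t ht
    by_cases h : t ≤ b
    · rw [hu1 p t ⟨ht.1, h⟩, ← hJq p i t ⟨ht.1, h⟩]
      ring
    · have h1 : t ∈ Ioc b T := ⟨not_le.1 h, ht.2⟩
      have h2 := hΦ p ⟨t, h1.1.le, h1.2⟩ i
      rw [hfix] at h2
      rw [hu2 p t h1, h2]
      ring
  exact ⟨T, u p, hbT, sol_of_integral hα haT hIcc (fun t ht => hKΩ (huK p t ht)) (hE p) hpt,
    fun s hs => hu1 p s hs⟩

theorem statement9 (a : ℝ) (If : Set ℝ)
    (haI : a ∈ If) (hIsub : If ⊆ Set.Ici a) (hIint : (interior If).Nonempty)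
    (hIord : If.OrdConnected)
    (m : ℕ) (hm : 0 < m) (Ω : Set (EuclideanSpace ℝ (Fin m)))
    (hΩopen : IsOpen Ω) (hΩne : Ω.Nonempty)
    (α : Fin m → ℝ) (hα : ∀ i, 0 < α i ∧ α i ≤ 1)
    (qa : EuclideanSpace ℝ (Fin m)) (hqa : qa ∈ Ω)
    (F : EuclideanSpace ℝ (Fin m) → ℝ → EuclideanSpace ℝ (Fin m))
    -- Carathéodory assumptions
    (hFmeas : ∀ x ∈ Ω, MeasureTheory.AEStronglyMeasurable (fun t => F x t)
      (MeasureTheory.volume.restrict If))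
    (hFcont : ∀ᵐ t ∂(MeasureTheory.volume.restrict If), ContinuousOn (fun x => F x t) Ω)
    -- `F` is bounded on compacts
    (hbdd : ∀ K : Set (EuclideanSpace ℝ (Fin m)), K ⊆ Ω → IsCompact K →
      ∀ c ∈ If, ∀ d ∈ If, c ≤ d → ∃ M : ℝ, 0 ≤ M ∧ ∀ x ∈ K,
        ∀ᵐ t ∂(MeasureTheory.volume.restrict (Set.Icc c d)), ‖F x t‖ ≤ M)
    -- `F` is locally Lipschitz continuous in its first variable
    (hlip : ∀ x ∈ Ω, ∀ t ∈ If, ∃ R > (0:ℝ), ∃ δ > (0:ℝ), ∃ L : ℝ, 0 ≤ L ∧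
      Metric.closedBall x R ⊆ Ω ∧
      ∀ x₁ ∈ Metric.closedBall x R, ∀ x₂ ∈ Metric.closedBall x R,
        ∀ᵐ τ ∂(MeasureTheory.volume.restrict (Set.Icc (t - δ) (t + δ) ∩ If)),
          ‖F x₂ τ - F x₁ τ‖ ≤ L * ‖x₂ - x₁‖) :
    ∀ (q : ℝ → EuclideanSpace ℝ (Fin m)) (I : Set ℝ),
      IsMaximalSol a If Ω α qa F q I →
      I = If ∨
        ∃ b ∈ If, a < b ∧ I = Set.Ico a b ∧
          ∀ K : Set (EuclideanSpace ℝ (Fin m)), K ⊆ Ω → IsCompact K →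
            ∃ t ∈ I, q t ∉ K := by
  intro q I hmax
  obtain ⟨hsol, hext⟩ := hmax
  by_cases hne : I = If
  · exact Or.inl hne
  right
  have hsol' := hsol
  obtain ⟨⟨haI', hIa, hint, hord⟩, hIIf, hqc, hqΩ, hqa', -⟩ := hsol'
  obtain ⟨d, hdIf, hdI⟩ : ∃ d ∈ If, d ∉ I := by
    by_contra! h
    exact hne (Subset.antisymm hIIf h)
  have hlt : ∀ x ∈ I, x < d := by
    intro x hx
    by_contra! h
    exact hdI (hord.out haI' hx ⟨hIsub hdIf, h⟩)
  have hbdda : BddAbove I := ⟨d, fun x hx => (hlt x hx).le⟩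
  set b := sSup I with hb
  have hle : ∀ x ∈ I, x ≤ b := fun x hx => le_csSup hbdda hx
  have hbd : b ≤ d := csSup_le ⟨a, haI'⟩ fun x hx => (hlt x hx).le
  have hab : a < b := by
    obtain ⟨y, hy⟩ := hint
    obtain ⟨z, hyz, hz⟩ := ((Filter.eventually_mem_set.2 (mem_interior_iff_mem_nhds.1 hy)).filter_mono
      nhdsWithin_le_nhds |>.and (self_mem_nhdsWithin (s := Ioi y))).exists
    exact (hIa (interior_subset hy)).trans_lt (lt_of_lt_of_le hz (hle _ hyz))
  have hbIf : b ∈ If := hIord.out haI hdIf ⟨hab.le, hbd⟩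
  have hsubI : Ico a b ⊆ I := by
    intro x hx
    obtain ⟨y, hy, hxy⟩ := exists_lt_of_lt_csSup ⟨a, haI'⟩ hx.2
    exact hord.out haI' hy ⟨hx.1, hxy.le⟩
  by_cases hbI : b ∈ I
  · exfalso
    have hIeq : I = Icc a b := Subset.antisymm (fun x hx => ⟨hIa hx, hle x hx⟩)
      (hord.out haI' hbI)
    rw [hIeq] at hsol
    obtain ⟨T, q', hbT, hs', heq⟩ := extend_closed hα haI hIord hFmeas hFcont hbdd hlip hab
      (hlt b hbI) hdIf hsol
    have := hext q' (Icc a T) hs' (by rw [hIeq]; exact Icc_subset_Icc_right hbT.le)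
      (by rw [hIeq]; exact heq)
    have hT : T ∈ I := by
      rw [← this]; exact ⟨(hab.trans hbT).le, le_rfl⟩
    exact absurd (hle T hT) (not_le.2 hbT)
  have hIeq : I = Ico a b := by
    refine Subset.antisymm (fun x hx => ⟨hIa hx, lt_of_le_of_ne (hle x hx) ?_⟩) hsubI
    rintro rfl
    exact hbI hx
  refine ⟨b, hbIf, hab, hIeq, fun K hKΩ hKc => ?_⟩
  by_contra! hK
  obtain ⟨M, hM0, hM⟩ := hbdd K hKΩ hKc a haI b hbIf hab.le
  have hIcc : Icc a b ⊆ If := hIord.out haI hbIf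
  have hIoc : Ioc a b ⊆ If := Ioc_subset_Icc_self.trans hIcc
  have hFcont' := ae_restrict_of_ae_restrict_of_subset hIoc hFcont
  have haeb : ∀ᵐ s ∂(volume.restrict (Ioc a b)), s ∈ Ioo a b := by
    rw [← Measure.restrict_congr_set (μ := (volume : Measure ℝ)) (Ioo_ae_eq_Ioc (a := a) (b := b))]
    exact ae_restrict_mem measurableSet_Ioo
  have hE : ∀ i, EssB a b M (fun t => F (q t) t i) := by
    intro i
    refine essB_comp hΩne hKΩ
      (fun x hx => (hFmeas x hx).mono_measure (Measure.restrict_mono hIoc le_rfl)) hFcont'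
      (ae_bound_K hKΩ hFcont' fun x hx =>
        ae_restrict_of_ae_restrict_of_subset Ioc_subset_Icc_self (hM x hx)) ?_ ?_ i
    · rw [← Measure.restrict_congr_set (μ := (volume : Measure ℝ)) (Ioo_ae_eq_Ioc (a := a) (b := b))]
      exact (hqc.mono (Ioo_subset_Ico_self.trans hsubI)).aemeasurable measurableSet_Ioo
    · filter_upwards [haeb] with s hs
      exact hK s (hsubI (Ioo_subset_Ico_self hs))
  let g : ℝ → EuclideanSpace ℝ (Fin m) :=
    fun t => WithLp.toLp 2 (fun i => qa i + fracJ a (α i) (fun t => F (q t) t i) t)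
  have hgi : ∀ t i, g t i = qa i + fracJ a (α i) (fun t => F (q t) t i) t := fun t i => rfl
  have hgc : ContinuousOn g (Icc a b) := by
    apply cont_of_coord
    intro i
    exact continuousOn_const.add (fracJ_cont (hα i).1 (hα i).2 (hE i))
  have hgq : ∀ t ∈ Ico a b, g t = q t := by
    intro t ht
    ext i
    rw [hgi]
    rcases ht.1.eq_or_lt with rfl | hlt'
    · rw [fracJ_self, hqa', add_zero]
    · rw [← integral_of_sol hα haI hFmeas hFcont hbdd hsol (hsubI ht) hlt' i t ⟨ht.1, le_rfl⟩]
      ring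
  have hgK : ∀ t ∈ Icc a b, g t ∈ K := by
    have h1 : MapsTo g (Ico a b) K := by
      intro t ht
      rw [hgq t ht]
      exact hK t (hsubI ht)
    have h2 := h1.closure_of_continuousOn (by rwa [closure_Ico hab.ne])
    rw [closure_Ico hab.ne, hKc.isClosed.closure_eq] at h2
    exact h2
  have hFg : ∀ i, ∀ᵐ s ∂(volume.restrict (Ioc a b)), F (q s) s i = F (g s) s i := by
    intro i
    filter_upwards [haeb] with s hs
    rw [hgq s (Ioo_subset_Ico_self hs)]
  have hnew : IsCaputoLocalSol a If Ω α qa F g (Icc a b) := by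
    refine sol_of_integral (M := M) hα hab hIcc (fun t ht => hKΩ (hgK t ht)) (fun i => ?_)
      (fun i t ht => ?_)
    · refine ⟨(hE i).1.congr (hFg i), ?_⟩
      filter_upwards [(hE i).2, hFg i] with s h1 h2
      rw [← h2]; exact h1
    · rw [hgi, add_sub_cancel_left]
      exact fracJ_congr ht.1 (ae_restrict_of_ae_restrict_of_subset
        (Ioc_subset_Ioc_right ht.2) (hFg i))
  have := hext g (Icc a b) hnew (by rw [hIeq]; exact Ico_subset_Icc_self)
    (by rw [hIeq]; exact hgq)
  exact hbI (this ▸ (⟨hab.le, le_rfl⟩ : b ∈ Icc a b))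
end

section
/- Let a ∈ ℝ, let I be an interval with least element a, nonempty interior, and I ⊂ [a,∞), let m ∈ ℕ*, let α = (α_{ij}) ∈ (0,1]^{m×m}, and let A : I → ℝ^{m×m} be locally essentially bounded. Suppose Z : {(t,s) : s,t ∈ I, s ≤ t} → ℝ^{m×m} satisfies, for almost every s, t ∈ I with s < t and all i, j ∈ {1,…,m}, the state-transition integral equation Z_{ij}(t,s) = ((t−s)^{α_{ij}−1}/Γ(α_{ij}))·δ_{ij} + (1/Γ(α_{ij})) ∫_s^t (t−τ)^{α_{ij}−1} (A(τ) Z(τ,s))_{ij} dτ (δ_{ij} the Kronecker delta). Then for every b ∈ I with b > a there exists Θ ≥ 0 such that |Z_{ij}(t,s)| ≤ (t−s)^{α_{ij}−1}·Θ for almost every a ≤ s < t ≤ b and every i, j ∈ {1,…,m}; in particular, for almost every t ∈ I with t > a, the function s ↦ Z(t,s) is Lebesgue integrable on [a,t]. -/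
open MeasureTheory Set

noncomputable def pk (β r : ℝ) : ENNReal := if 0 < r then ENNReal.ofReal (r ^ (β - 1)) else 0

noncomputable def qk (β l r : ℝ) : ENNReal := pk β r * ENNReal.ofReal (Real.exp (-(l * r)))

lemma pk_meas (β : ℝ) : Measurable (pk β) := by
  unfold pk
  exact Measurable.ite measurableSet_Ioi (by fun_prop) measurable_const

lemma qk_meas (β l : ℝ) : Measurable (qk β l) := by
  unfold qk
  exact (pk_meas β).mul (by fun_prop)

lemma qk_int (β l : ℝ) (hβ : 0 < β) (hl : 0 < l) :
    ∫⁻ r, qk β l r = ENNReal.ofReal ((1 / l) ^ β * Real.Gamma β) := by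
  have h := Real.integral_rpow_mul_exp_neg_mul_Ioi hβ hl
  have hpos : 0 < (1 / l) ^ β * Real.Gamma β :=
    mul_pos (Real.rpow_pos_of_pos (by positivity) _) (Real.Gamma_pos_of_pos hβ)
  have hIntg : Integrable (fun t : ℝ => t ^ (β - 1) * Real.exp (-(l * t))) (volume.restrict (Ioi 0)) := by
    by_contra hc
    rw [integral_undef hc] at h
    exact hpos.ne h
  rw [← h, ofReal_integral_eq_lintegral_ofReal hIntg]
  · rw [← lintegral_indicator measurableSet_Ioi]
    congr 1
    ext r
    by_cases hr : 0 < r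
    · simp only [qk, pk, hr, if_true, indicator, mem_Ioi]
      rw [ENNReal.ofReal_mul (Real.rpow_nonneg hr.le _)]
    · simp [qk, pk, hr, indicator]
  · filter_upwards [ae_restrict_mem measurableSet_Ioi] with r hr
    exact mul_nonneg (Real.rpow_nonneg (le_of_lt hr) _) (Real.exp_pos _).le

lemma key_real (β l x y : ℝ) (hβ : 0 < β) (hβ1 : β ≤ 1) (hl : 0 ≤ l) (hx : 0 < x) (hy : 0 < y) :
    x ^ (β - 1) * (y ^ (β - 1) * Real.exp (l * y)) ≤
      2 * (x + y) ^ (β - 1) * Real.exp (l * (x + y)) *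
        (x ^ (β - 1) * Real.exp (-(l * x)) + y ^ (β - 1) * Real.exp (-(l * y))) := by
  have half : ∀ z, (x + y) / 2 ≤ z → z ^ (β - 1) ≤ 2 * (x + y) ^ (β - 1) := by
    intro z hz
    calc z ^ (β - 1) ≤ ((x + y) / 2) ^ (β - 1) :=
          Real.rpow_le_rpow_of_nonpos (by positivity) hz (by linarith)
      _ = (x + y) ^ (β - 1) * (2:ℝ) ^ (1 - β) := by
          rw [Real.div_rpow (by positivity) (by norm_num), div_eq_mul_inv,
            ← Real.rpow_neg (by norm_num)]
          congr 2; ring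
      _ ≤ (x + y) ^ (β - 1) * 2 := by
          gcongr
          calc (2:ℝ) ^ (1 - β) ≤ 2 ^ (1:ℝ) :=
                Real.rpow_le_rpow_of_exponent_le (by norm_num) (by linarith)
            _ = 2 := by simp
      _ = _ := by ring
  have hX : 0 < x ^ (β - 1) := Real.rpow_pos_of_pos hx _
  have hY : 0 < y ^ (β - 1) := Real.rpow_pos_of_pos hy _
  have hS : 0 < (x + y) ^ (β - 1) := Real.rpow_pos_of_pos (by positivity) _
  rcases le_total y x with h | h
  · have h1 := half x (by linarith)
    have h2 : Real.exp (l * y) ≤ Real.exp (l * (x + y)) * Real.exp (-(l * y)) := by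
      rw [← Real.exp_add]
      apply Real.exp_le_exp.2
      nlinarith [mul_le_mul_of_nonneg_left h hl]
    calc x ^ (β - 1) * (y ^ (β - 1) * Real.exp (l * y))
        ≤ (2 * (x + y) ^ (β - 1)) * (y ^ (β - 1) * (Real.exp (l * (x + y)) * Real.exp (-(l * y)))) := by
          gcongr
      _ = 2 * (x + y) ^ (β - 1) * Real.exp (l * (x + y)) * (0 + y ^ (β - 1) * Real.exp (-(l * y))) := by ring
      _ ≤ _ := by gcongr; positivity
  · have h1 := half y (by linarith)
    have h2 : Real.exp (l * y) = Real.exp (l * (x + y)) * Real.exp (-(l * x)) := by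
      rw [← Real.exp_add]
      congr 1; ring
    calc x ^ (β - 1) * (y ^ (β - 1) * Real.exp (l * y))
        ≤ x ^ (β - 1) * ((2 * (x + y) ^ (β - 1)) * Real.exp (l * y)) := by
          gcongr
      _ = 2 * (x + y) ^ (β - 1) * Real.exp (l * (x + y)) * (x ^ (β - 1) * Real.exp (-(l * x)) + 0) := by
          rw [h2]; ring
      _ ≤ _ := by gcongr; positivity

lemma conv_bound (β l s t : ℝ) (hβ : 0 < β) (hβ1 : β ≤ 1) (hl : 0 < l) :
    ∫⁻ τ, pk β (t - τ) * (pk β (τ - s) * ENNReal.ofReal (Real.exp (l * (τ - s)))) ≤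
      ENNReal.ofReal (4 * ((1 / l) ^ β * Real.Gamma β)) *
        (pk β (t - s) * ENNReal.ofReal (Real.exp (l * (t - s)))) := by
  have hpt : ∀ τ, pk β (t - τ) * (pk β (τ - s) * ENNReal.ofReal (Real.exp (l * (τ - s)))) ≤
      2 * (pk β (t - s) * ENNReal.ofReal (Real.exp (l * (t - s)))) *
        (qk β l (t - τ) + qk β l (τ - s)) := by
    intro τ
    by_cases hx : 0 < t - τ
    swap
    · simp [pk, hx]
    by_cases hy : 0 < τ - s
    swap
    · simp [pk, hy]
    have hxy : 0 < t - s := by linarith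
    have h := key_real β l (t - τ) (τ - s) hβ hβ1 hl.le hx hy
    rw [show t - τ + (τ - s) = t - s by ring] at h
    have hX := Real.rpow_pos_of_pos hx (β - 1)
    have hY := Real.rpow_pos_of_pos hy (β - 1)
    have hS := Real.rpow_pos_of_pos hxy (β - 1)
    simp only [qk, pk, hx, hy, hxy, if_true]
    rw [show (2 : ENNReal) = ENNReal.ofReal 2 by simp]
    simp only [← ENNReal.ofReal_mul hX.le, ← ENNReal.ofReal_mul hY.le, ← ENNReal.ofReal_mul hS.le]
    rw [← ENNReal.ofReal_add (by positivity) (by positivity),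
      ← ENNReal.ofReal_mul (by positivity), ← ENNReal.ofReal_mul (by positivity)]
    apply ENNReal.ofReal_le_ofReal
    linarith
  have hG : 0 ≤ (1 / l) ^ β * Real.Gamma β :=
    (mul_pos (Real.rpow_pos_of_pos (by positivity) _) (Real.Gamma_pos_of_pos hβ)).le
  calc _ ≤ ∫⁻ τ, 2 * (pk β (t - s) * ENNReal.ofReal (Real.exp (l * (t - s)))) *
        (qk β l (t - τ) + qk β l (τ - s)) := lintegral_mono hpt
    _ = 2 * (pk β (t - s) * ENNReal.ofReal (Real.exp (l * (t - s)))) *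
        ((∫⁻ r, qk β l r) + ∫⁻ r, qk β l r) := by
        have m1 : Measurable fun τ => qk β l (t - τ) := (qk_meas β l).comp (by fun_prop)
        have m2 : Measurable fun τ => qk β l (τ - s) := (qk_meas β l).comp (by fun_prop)
        rw [lintegral_const_mul _ (by exact m1.add m2), lintegral_add_left m1,
          lintegral_sub_left_eq_self (qk β l) t, lintegral_sub_right_eq_self (qk β l) s]
    _ = _ := by
        rw [qk_int β l hβ hl, ENNReal.ofReal_mul (by norm_num : (0:ℝ) ≤ 4),
          show ENNReal.ofReal 4 = 4 by simp]
        ring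

lemma pk_meas2 (β : ℝ) : Measurable fun z : ℝ × ℝ => pk β (z.1 - z.2) :=
  (pk_meas β).comp (by fun_prop)

lemma qk_meas2 (β l : ℝ) : Measurable fun z : ℝ × ℝ => qk β l (z.1 - z.2) :=
  (qk_meas β l).comp (by fun_prop)

lemma lint_conv (k W : ℝ → ENNReal) (hk : Measurable k) (hW : Measurable W) :
    ∫⁻ t, ∫⁻ τ, k (t - τ) * W τ = (∫⁻ r, k r) * ∫⁻ τ, W τ := by
  have hm : Measurable fun z : ℝ × ℝ => k (z.1 - z.2) * W z.2 :=
    (hk.comp (by fun_prop)).mul (hW.comp measurable_snd)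
  rw [lintegral_lintegral_swap hm.aemeasurable]
  have : ∀ τ, ∫⁻ t, k (t - τ) * W τ = (∫⁻ r, k r) * W τ := by
    intro τ
    have mk : Measurable fun t => k (t - τ) := hk.comp (by fun_prop)
    rw [lintegral_mul_const _ mk, lintegral_sub_right_eq_self k τ]
  simp_rw [this]
  rw [lintegral_const_mul _ hW]

lemma gronwall (β : ℝ) (hβ : 0 < β) (hβ1 : β ≤ 1) (C D : NNReal) (L : ℝ) :
    ∃ K : NNReal, ∀ s T : ℝ, T - s ≤ L → ∀ u : ℝ → ENNReal, Measurable u →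
      (∫⁻ t in Ioo s T, u t) ≠ ⊤ →
      (∀ᵐ t, t ∈ Ioo s T → u t ≤ D * pk β (t - s) +
        C * ∫⁻ τ, pk β (t - τ) * (Ioo s T).indicator u τ) →
      ∀ᵐ t, t ∈ Ioo s T → u t ≤ K * pk β (t - s) := by
  have hΓ := Real.Gamma_pos_of_pos hβ
  obtain ⟨l, hl, hl1⟩ : ∃ l : ℝ, 0 < l ∧ C * (4 * ((1 / l) ^ β * Real.Gamma β)) ≤ 1 / 2 := by
    set ε : ℝ := 1 / (8 * (C + 1) * Real.Gamma β) with hε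
    have hε0 : 0 < ε := by positivity
    refine ⟨1 / ε ^ (β⁻¹), by positivity, ?_⟩
    rw [one_div_one_div, Real.rpow_inv_rpow hε0.le hβ.ne', hε]
    have : (C : ℝ) * (4 * (1 / (8 * (C + 1) * Real.Gamma β) * Real.Gamma β)) = C / (C + 1) / 2 := by
      field_simp; ring
    rw [this]
    have : (C : ℝ) / (C + 1) ≤ 1 := by
      rw [div_le_one (by positivity)]; linarith
    linarith
  have hG : 0 ≤ (1 / l) ^ β * Real.Gamma β := by positivity
  have hE1 : (C : ENNReal) * ENNReal.ofReal (4 * ((1 / l) ^ β * Real.Gamma β)) ≤ 2⁻¹ := by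
    rw [← ENNReal.ofReal_coe_nnreal, ← ENNReal.ofReal_mul (by positivity)]
    refine (ENNReal.ofReal_le_ofReal hl1).trans ?_
    rw [one_div, ENNReal.ofReal_inv_of_pos (by norm_num)]; simp
  have hE2 : (C : ENNReal) * ∫⁻ r, qk β l r ≤ 2⁻¹ := by
    refine le_trans ?_ hE1
    rw [qk_int β l hβ hl]
    have : (1 / l) ^ β * Real.Gamma β ≤ 4 * ((1 / l) ^ β * Real.Gamma β) := by linarith
    gcongr
  refine ⟨2 * D * (Real.exp (l * L)).toNNReal, ?_⟩
  intro s T hL u hu hfin hle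
  set E : ℝ → ENNReal := fun τ => ENNReal.ofReal (Real.exp (l * (τ - s))) with hEdef
  set v : ℝ → ENNReal := fun τ => 2 * D * (pk β (τ - s) * E τ) with hv
  have hvm : Measurable v := by
    have : Measurable fun τ => pk β (τ - s) := (pk_meas β).comp (by fun_prop)
    exact (this.mul (by fun_prop)).const_mul _
  have hsup : ∀ t, s < t → D * pk β (t - s) + C * ∫⁻ τ, pk β (t - τ) * v τ ≤ v t := by
    intro t ht
    have e1 : (∫⁻ τ, pk β (t - τ) * v τ) = 2 * D * ∫⁻ τ, pk β (t - τ) * (pk β (τ - s) * E τ) := by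
      rw [← lintegral_const_mul']
      · congr 1; ext τ; simp only [hv]; ring
      · finiteness
    have e2 := conv_bound β l s t hβ hβ1 hl
    have e3 : 1 ≤ E t := by
      simp only [hEdef]
      rw [← ENNReal.ofReal_one]
      apply ENNReal.ofReal_le_ofReal
      apply Real.one_le_exp
      have := sub_pos.2 ht
      positivity
    calc _ ≤ D * (pk β (t - s) * E t) + C * (2 * D * (ENNReal.ofReal (4 * ((1 / l) ^ β * Real.Gamma β)) *
        (pk β (t - s) * E t))) := by
          rw [e1]
          gcongr
          exact le_mul_of_one_le_right (by simp) e3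
      _ = D * (pk β (t - s) * E t) + (C * ENNReal.ofReal (4 * ((1 / l) ^ β * Real.Gamma β))) * (2 * (D *
        (pk β (t - s) * E t))) := by ring
      _ ≤ D * (pk β (t - s) * E t) + 2⁻¹ * (2 * (D * (pk β (t - s) * E t))) := by gcongr
      _ = v t := by
          rw [← mul_assoc 2⁻¹, ENNReal.inv_mul_cancel (by simp) (by simp)]
          simp only [hv]; ring
  set w : ℝ → ENNReal := (Ioo s T).indicator (fun t => u t - v t) with hw
  have hwm : Measurable w := (hu.sub hvm).indicator measurableSet_Ioo
  have hUw : ∀ τ, (Ioo s T).indicator u τ ≤ w τ + v τ := by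
    intro τ
    by_cases hτ : τ ∈ Ioo s T
    · simp only [hw, indicator_of_mem hτ]; exact le_tsub_add
    · simp [indicator_of_notMem hτ]
  have hwle : ∀ᵐ t, w t ≤ C * ∫⁻ τ, pk β (t - τ) * w τ := by
    filter_upwards [hle] with t ht
    by_cases hmem : t ∈ Ioo s T
    swap
    · simp [hw, indicator_of_notMem hmem]
    have h1 := ht hmem
    simp only [hw, indicator_of_mem hmem]
    rw [tsub_le_iff_left]
    have mk : Measurable fun τ => pk β (t - τ) := (pk_meas β).comp (by fun_prop)
    calc u t ≤ D * pk β (t - s) + C * ∫⁻ τ, pk β (t - τ) * (w τ + v τ) := by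
          refine h1.trans ?_
          gcongr with τ
          exact hUw τ
      _ = (D * pk β (t - s) + C * ∫⁻ τ, pk β (t - τ) * v τ) + C * ∫⁻ τ, pk β (t - τ) * w τ := by
          simp_rw [mul_add]
          rw [lintegral_add_left (by exact mk.mul hwm)]
          ring
      _ ≤ v t + C * ∫⁻ τ, pk β (t - τ) * w τ := by
          gcongr
          exact hsup t hmem.1
  set W : ℝ → ENNReal := fun t => w t * ENNReal.ofReal (Real.exp (-(l * (t - s)))) with hW
  have hWm : Measurable W := hwm.mul (by fun_prop)
  have hWle : ∀ᵐ t, W t ≤ C * ∫⁻ τ, qk β l (t - τ) * W τ := by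
    filter_upwards [hwle] with t ht
    simp only [hW]
    calc _ ≤ (C * ∫⁻ τ, pk β (t - τ) * w τ) * ENNReal.ofReal (Real.exp (-(l * (t - s)))) := by gcongr
      _ = _ := by
        rw [mul_assoc, ← lintegral_mul_const' _ _ ENNReal.ofReal_ne_top]
        congr 2
        ext τ
        have : ENNReal.ofReal (Real.exp (-(l * (t - s)))) =
          ENNReal.ofReal (Real.exp (-(l * (t - τ)))) * ENNReal.ofReal (Real.exp (-(l * (τ - s)))) := by
          rw [← ENNReal.ofReal_mul (Real.exp_pos _).le, ← Real.exp_add]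
          congr 2; ring
        rw [this]
        simp only [qk]
        ring
  have hWfin : ∫⁻ t, W t ≠ ⊤ := by
    apply ne_top_of_le_ne_top hfin
    rw [← lintegral_indicator measurableSet_Ioo]
    apply lintegral_mono
    intro t
    by_cases hmem : t ∈ Ioo s T
    swap
    · simp [hW, hw, indicator_of_notMem hmem]
    simp only [hW, hw, indicator_of_mem hmem]
    calc (u t - v t) * ENNReal.ofReal (Real.exp (-(l * (t - s)))) ≤ u t * 1 := by
          gcongr
          · exact tsub_le_self
          · rw [ENNReal.ofReal_le_one, Real.exp_le_one_iff]
            have := sub_pos.2 hmem.1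
            have := mul_pos hl this
            linarith
      _ = u t := mul_one _
  have hW0 : ∫⁻ t, W t = 0 := by
    have h1 : ∫⁻ t, W t ≤ 2⁻¹ * ∫⁻ t, W t := by
      calc ∫⁻ t, W t ≤ ∫⁻ t, C * ∫⁻ τ, qk β l (t - τ) * W τ := lintegral_mono_ae hWle
        _ = (C * ∫⁻ r, qk β l r) * ∫⁻ τ, W τ := by
          rw [lintegral_const_mul' _ _ (by simp), lint_conv _ _ (qk_meas β l) hWm, mul_assoc]
        _ ≤ _ := by gcongr
    by_contra h0
    have h2 : 2⁻¹ * ∫⁻ t, W t < ∫⁻ t, W t := by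
      rw [mul_comm, ← div_eq_mul_inv]
      exact ENNReal.half_lt_self h0 hWfin
    exact absurd h1 (not_le.2 h2)
  rw [lintegral_eq_zero_iff hWm] at hW0
  filter_upwards [hW0] with t ht hmem
  have h3 : u t - v t = 0 := by
    simp only [hW, hw, indicator_of_mem hmem, Pi.zero_apply, mul_eq_zero, ENNReal.ofReal_eq_zero] at ht
    rcases ht with h | h
    · exact h
    · exact absurd h (not_le.2 (Real.exp_pos _))
  refine (tsub_eq_zero_iff_le.1 h3).trans ?_
  simp only [hv, hEdef]
  have : ENNReal.ofReal (Real.exp (l * (t - s))) ≤ ((Real.exp (l * L)).toNNReal : ENNReal) := by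
    apply ENNReal.ofReal_le_ofReal
    apply Real.exp_le_exp.2
    have : t - s ≤ L := by linarith [hmem.2]
    gcongr
  push_cast
  calc _ ≤ 2 * D * (pk β (t - s) * ((Real.exp (l * L)).toNNReal : ENNReal)) := by gcongr
    _ = _ := by ring

lemma pk_le_qk (α L r : ℝ) (hr : r ≤ L) :
    pk α r ≤ ENNReal.ofReal (Real.exp L) * qk α 1 r := by
  unfold qk
  have : 1 ≤ ENNReal.ofReal (Real.exp L) * ENNReal.ofReal (Real.exp (-(1 * r))) := by
    rw [← ENNReal.ofReal_mul (Real.exp_pos _).le, ← Real.exp_add, ← ENNReal.ofReal_one]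
    apply ENNReal.ofReal_le_ofReal
    apply Real.one_le_exp
    linarith
  calc pk α r ≤ pk α r * (ENNReal.ofReal (Real.exp L) * ENNReal.ofReal (Real.exp (-(1 * r)))) :=
        le_mul_of_one_le_right (by simp) this
    _ = _ := by ring

lemma pk_exp (α β r : ℝ) (hr : 0 < r) :
    ENNReal.ofReal (r ^ (α - β)) * pk β r = pk α r := by
  simp only [pk, hr, if_true]
  rw [← ENNReal.ofReal_mul (Real.rpow_nonneg hr.le _), ← Real.rpow_add hr]
  congr 2; ring

lemma pk_le_pk (α β r R : ℝ) (hr : r ≤ R) (hab : β ≤ α) :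
    pk α r ≤ ENNReal.ofReal (R ^ (α - β)) * pk β r := by
  by_cases h : 0 < r
  · rw [← pk_exp α β r h]
    have : r ^ (α - β) ≤ R ^ (α - β) := Real.rpow_le_rpow h.le hr (by linarith)
    gcongr
  · simp [pk, h]

lemma col (m : ℕ) (β : ℝ) (hβ : 0 < β) (hβ1 : β ≤ 1) (M Λ : NNReal) (L : ℝ) :
    ∃ Θ : NNReal, ∀ s b : ℝ, b - s ≤ L → ∀ α : Fin m → ℝ,
      (∀ i, β ≤ α i ∧ α i ≤ 1) → (∀ i, 1 / Real.Gamma (α i) ≤ Λ) →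
      ∀ A : ℝ → Matrix (Fin m) (Fin m) ℝ,
      (∀ᵐ t, t ∈ Ioo s b → ∀ i k, |A t i k| ≤ M) →
      ∀ x : Fin m → ℝ → ℝ, (∀ i, Measurable (x i)) → (∀ i j, Measurable fun t => A t i j) → ∀ j : Fin m,
      (∀ᵐ t, t ∈ Ioo s b → ∀ i, x i t = (t - s) ^ (α i - 1) / Real.Gamma (α i) *
          (if i = j then (1:ℝ) else 0) + (1 / Real.Gamma (α i)) *
            ∫ τ in s..t, (t - τ) ^ (α i - 1) * ∑ k, A τ i k * x k τ) →
      (∀ᵐ t, t ∈ Ioo s b → ∀ i, IntervalIntegrable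
        (fun τ => (t - τ) ^ (α i - 1) * ∑ k, A τ i k * x k τ) volume s t) →
      ∀ᵐ t, t ∈ Ioo s b → ∀ i, ‖x i t‖ₑ ≤ Θ * pk (α i) (t - s) := by
  set N : NNReal := (max 1 L).toNNReal with hN
  obtain ⟨K, hK⟩ := gronwall β hβ hβ1 (m * (Λ * M * N)) (m * (Λ * N)) L
  refine ⟨Λ + Λ * M * K * ((4 * ((1 / 1) ^ β * Real.Gamma β)).toNNReal * (Real.exp (1 * L)).toNNReal), ?_⟩
  intro s b hL α hα hΛ A hA x hx hAm j heq hIntg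
  have hα0 : ∀ i, 0 < α i := fun i => hβ.trans_le (hα i).1
  set y : Fin m → ℝ → ℝ := fun i τ => ∑ k, A τ i k * x k τ with hy
  have hym : ∀ i, Measurable (y i) := fun i =>
    Finset.measurable_sum _ (fun k _ => (hAm i k).mul (hx k))
  set u : ℝ → ENNReal := fun t => ∑ k, ‖x k t‖ₑ with hu
  have hum : Measurable u := Finset.measurable_sum _ (fun k _ => (hx k).enorm)
  -- step 1
  have h1 : ∀ᵐ t, t ∈ Ioo s b → ∀ i, ‖x i t‖ₑ ≤ Λ * pk (α i) (t - s) +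
      Λ * ∫⁻ τ in Ioo s t, pk (α i) (t - τ) * ‖y i τ‖ₑ := by
    filter_upwards [heq] with t ht hmem i
    have hts : 0 < t - s := sub_pos.2 hmem.1
    have hG := Real.Gamma_pos_of_pos (hα0 i)
    have hGL : ENNReal.ofReal (1 / Real.Gamma (α i)) ≤ Λ := by
      rw [← ENNReal.ofReal_coe_nnreal]
      exact ENNReal.ofReal_le_ofReal (hΛ i)
    rw [ht hmem i]
    refine (enorm_add_le _ _).trans ?_
    gcongr
    · simp only [pk, hts, if_true]
      calc _ ≤ ENNReal.ofReal (1 / Real.Gamma (α i) * (t - s) ^ (α i - 1)) := by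
            rw [← ofReal_norm]
            apply ENNReal.ofReal_le_ofReal
            have := Real.rpow_pos_of_pos hts (α i - 1)
            split_ifs
            · rw [mul_one, Real.norm_of_nonneg (by positivity)]
              apply le_of_eq; ring
            · simp; positivity
        _ ≤ _ := by
            rw [ENNReal.ofReal_mul (by positivity)]
            gcongr
    · rw [enorm_mul]
      gcongr
      · rw [← ofReal_norm, Real.norm_of_nonneg (by positivity)]
        exact hGL
      · rw [intervalIntegral.integral_of_le hmem.1.le, integral_Ioc_eq_integral_Ioo]
        refine (enorm_integral_le_lintegral_enorm _).trans ?_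
        apply setLIntegral_mono' measurableSet_Ioo
        intro τ hτ
        have htτ : 0 < t - τ := sub_pos.2 hτ.2
        rw [enorm_mul]
        gcongr
        simp only [pk, htτ, if_true]
        rw [← ofReal_norm, Real.norm_of_nonneg (Real.rpow_nonneg htτ.le _)]
  -- step 2
  have h2 : ∀ T, T < b → ∀ i, ∫⁻ τ in Ioo s T, ‖y i τ‖ₑ ≠ ⊤ := by
    intro T hT i
    rcases le_or_gt T s with h | hsT
    · simp [Ioo_eq_empty (not_lt.2 h)]
    obtain ⟨t, ht, ht2⟩ : ∃ t, t ∈ Ioo T b ∧ (t ∈ Ioo s b → ∀ i, IntervalIntegrable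
        (fun τ => (t - τ) ^ (α i - 1) * ∑ k, A τ i k * x k τ) volume s t) := by
      by_contra hc
      push Not at hc
      have : volume (Ioo T b) = 0 := by
        refine measure_mono_null ?_ (ae_iff.1 hIntg)
        intro t ht
        obtain ⟨h1, h2⟩ := hc t ht
        simp only [mem_ofPred_eq, Classical.not_imp, not_forall]
        exact ⟨h1, h2⟩
      simp at this
      linarith
    have hst : s < t := hsT.trans ht.1
    have hts : 0 < t - s := sub_pos.2 hst
    have hi := (ht2 ⟨hst, ht.2⟩ i)
    rw [intervalIntegrable_iff_integrableOn_Ioo_of_le hst.le] at hi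
    have hfin := hi.2
    rw [hasFiniteIntegral_iff_enorm] at hfin
    have hle : ∫⁻ τ in Ioo s T, ‖y i τ‖ₑ ≤ ENNReal.ofReal ((t - s) ^ (1 - α i)) *
        ∫⁻ τ in Ioo s t, ‖(t - τ) ^ (α i - 1) * ∑ k, A τ i k * x k τ‖ₑ := by
      rw [← lintegral_const_mul' _ _ ENNReal.ofReal_ne_top]
      refine (lintegral_mono_set (Ioo_subset_Ioo_right ht.1.le)).trans ?_
      apply setLIntegral_mono' measurableSet_Ioo
      intro τ hτ
      have htτ : 0 < t - τ := sub_pos.2 hτ.2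
      have hge : 1 ≤ (t - s) ^ (1 - α i) * (t - τ) ^ (α i - 1) := by
        have e : (t - s) ^ (1 - α i) * (t - s) ^ (α i - 1) = 1 := by
          rw [← Real.rpow_add hts]; simp
        have e2 : (t - s) ^ (α i - 1) ≤ (t - τ) ^ (α i - 1) :=
          Real.rpow_le_rpow_of_nonpos htτ (by linarith [hτ.1]) (by linarith [(hα i).2])
        have e3 := Real.rpow_nonneg hts.le (1 - α i)
        exact e.ge.trans (mul_le_mul_of_nonneg_left e2 e3)
      rw [enorm_mul, ← mul_assoc, ← ofReal_norm ((t - τ) ^ (α i - 1)),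
        Real.norm_of_nonneg (Real.rpow_nonneg htτ.le _),
        ← ENNReal.ofReal_mul (Real.rpow_nonneg hts.le _)]
      refine le_mul_of_one_le_left (by simp) ?_
      rw [← ENNReal.ofReal_one]
      exact ENNReal.ofReal_le_ofReal hge
    exact ne_top_of_le_ne_top (ENNReal.mul_ne_top ENNReal.ofReal_ne_top hfin.ne) hle
  -- step 3
  have h3 : ∀ T, T < b → ∫⁻ τ in Ioo s T, u τ ≠ ⊤ := by
    intro T hT
    simp only [hu]
    rw [lintegral_finsetSum _ (fun k _ => (hx k).enorm)]
    refine ENNReal.sum_ne_top.2 fun i _ => ?_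
    set e : ENNReal := ENNReal.ofReal (Real.exp L) with he
    set Y : ℝ → ENNReal := (Ioo s T).indicator (fun τ => ‖y i τ‖ₑ) with hY
    have hYm : Measurable Y := (hym i).enorm.indicator measurableSet_Ioo
    have mq : Measurable fun t => qk (α i) 1 (t - s) := (qk_meas _ _).comp (by fun_prop)
    have hq := qk_int (α i) 1 (hα0 i) one_pos
    have hle : ∫⁻ t in Ioo s T, ‖x i t‖ₑ ≤
        ∫⁻ t, (Λ * e * qk (α i) 1 (t - s) + Λ * e * ∫⁻ τ, qk (α i) 1 (t - τ) * Y τ) := by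
      refine le_trans ?_ (setLIntegral_le_lintegral (Ioo s T) _)
      apply setLIntegral_mono_ae' measurableSet_Ioo
      filter_upwards [h1] with t ht hmem
      refine (ht ⟨hmem.1, hmem.2.trans hT⟩ i).trans ?_
      rw [mul_assoc, mul_assoc]
      gcongr
      · exact pk_le_qk _ _ _ (by linarith [hmem.2])
      · rw [← lintegral_const_mul' _ _ ENNReal.ofReal_ne_top, ← lintegral_indicator measurableSet_Ioo]
        apply lintegral_mono
        intro τ
        by_cases hτ : τ ∈ Ioo s t
        · have hτ' : τ ∈ Ioo s T := ⟨hτ.1, hτ.2.trans hmem.2⟩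
          simp only [hY, indicator_of_mem hτ, indicator_of_mem hτ']
          rw [← mul_assoc]
          gcongr
          exact pk_le_qk _ _ _ (by linarith [hmem.2, hτ.1])
        · simp [indicator_of_notMem hτ]
    refine ne_top_of_le_ne_top ?_ hle
    rw [lintegral_add_left (mq.const_mul _), lintegral_const_mul' _ _ (by finiteness),
      lintegral_const_mul' _ _ (by finiteness), lint_conv _ _ (qk_meas _ _) hYm,
      lintegral_sub_right_eq_self (qk (α i) 1) s, hq]
    have : ∫⁻ τ, Y τ ≠ ⊤ := by
      rw [hY, lintegral_indicator measurableSet_Ioo]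
      exact h2 T hT i
    finiteness
  -- step 4
  have h4 : ∀ᵐ t, t ∈ Ioo s b → ∀ i, ‖x i t‖ₑ ≤ Λ * pk (α i) (t - s) +
      Λ * M * ∫⁻ τ in Ioo s t, pk (α i) (t - τ) * u τ := by
    filter_upwards [h1] with t ht hmem i
    refine (ht hmem i).trans ?_
    rw [mul_assoc (Λ : ENNReal)]
    gcongr
    rw [← lintegral_const_mul' _ _ (by finiteness)]
    apply setLIntegral_mono_ae' measurableSet_Ioo
    filter_upwards [hA] with τ hτ hτm
    have hb := hτ ⟨hτm.1, hτm.2.trans hmem.2⟩ i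
    have : ‖y i τ‖ₑ ≤ M * u τ := by
      simp only [hy, hu]
      rw [Finset.mul_sum]
      refine (enorm_sum_le _ _).trans ?_
      gcongr with k
      rw [enorm_mul]
      gcongr
      rw [← ofReal_norm, ← ENNReal.ofReal_coe_nnreal]
      exact ENNReal.ofReal_le_ofReal (hb k)
    calc _ ≤ pk (α i) (t - τ) * (M * u τ) := by gcongr
      _ = _ := by ring
  have hNle : ∀ i R, 0 < R → R ≤ L → ENNReal.ofReal (R ^ (α i - β)) ≤ N := by
    intro i R hR hRL
    apply ENNReal.ofReal_le_ofReal
    have h1 : (1:ℝ) ≤ max 1 L := le_max_left _ _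
    calc R ^ (α i - β) ≤ (max 1 L) ^ (α i - β) :=
          Real.rpow_le_rpow hR.le (hRL.trans (le_max_right _ _)) (by linarith [(hα i).1])
      _ ≤ (max 1 L) ^ (1:ℝ) := Real.rpow_le_rpow_of_exponent_le h1 (by linarith [(hα i).2])
      _ = _ := by simp
  -- step 5
  have h5 : ∀ T, T < b → ∀ᵐ t, t ∈ Ioo s T → u t ≤ K * pk β (t - s) := by
    intro T hT
    apply hK s T (by linarith) u hum (h3 T hT)
    filter_upwards [h4] with t ht hmem
    have hmem' : t ∈ Ioo s b := ⟨hmem.1, hmem.2.trans hT⟩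
    have hts : 0 < t - s := sub_pos.2 hmem.1
    have htL : t - s ≤ L := by linarith [hmem'.2]
    have hi : ∀ i, ‖x i t‖ₑ ≤ Λ * N * pk β (t - s) +
        Λ * M * N * ∫⁻ τ, pk β (t - τ) * (Ioo s T).indicator u τ := by
      intro i
      refine (ht hmem' i).trans ?_
      rw [mul_assoc (Λ : ENNReal) N, mul_assoc ((Λ : ENNReal) * M) N]
      gcongr
      · refine (pk_le_pk (α i) β _ (t - s) le_rfl (hα i).1).trans ?_
        gcongr
        exact hNle i _ hts htL
      · rw [← lintegral_const_mul' _ _ (by finiteness), ← lintegral_indicator measurableSet_Ioo]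
        apply lintegral_mono
        intro τ
        by_cases hτ : τ ∈ Ioo s t
        · have hτ' : τ ∈ Ioo s T := ⟨hτ.1, hτ.2.trans hmem.2⟩
          simp only [indicator_of_mem hτ, indicator_of_mem hτ']
          rw [← mul_assoc]
          gcongr
          refine (pk_le_pk (α i) β _ (t - s) (by linarith [hτ.1]) (hα i).1).trans ?_
          gcongr
          exact hNle i _ hts htL
        · simp [indicator_of_notMem hτ]
    calc u t ≤ ∑ i : Fin m, (Λ * N * pk β (t - s) +
        Λ * M * N * ∫⁻ τ, pk β (t - τ) * (Ioo s T).indicator u τ) := Finset.sum_le_sum fun i _ => hi i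
      _ = _ := by
        rw [Finset.sum_const, Finset.card_univ, Fintype.card_fin, nsmul_eq_mul]
        push_cast
        ring
  have h5' : ∀ᵐ t, t ∈ Ioo s b → u t ≤ K * pk β (t - s) := by
    have : ∀ᵐ t, ∀ T : ℚ, (T : ℝ) < b → t ∈ Ioo s (T : ℝ) → u t ≤ K * pk β (t - s) := by
      rw [ae_all_iff]
      intro T
      by_cases hT : (T : ℝ) < b
      · filter_upwards [h5 T hT] with t ht _ using ht
      · exact Filter.Eventually.of_forall fun t h => absurd h hT
    filter_upwards [this] with t ht hmem
    obtain ⟨T, hT1, hT2⟩ := exists_rat_btwn hmem.2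
    exact ht T hT2 ⟨hmem.1, hT1⟩
  -- step 6
  filter_upwards [h4] with t ht hmem i
  have hts : 0 < t - s := sub_pos.2 hmem.1
  have htL : t - s ≤ L := by linarith [hmem.2]
  refine (ht hmem i).trans ?_
  have hI : ∫⁻ τ in Ioo s t, pk (α i) (t - τ) * u τ ≤
      K * ENNReal.ofReal ((t - s) ^ (α i - β)) *
        ∫⁻ τ, pk β (t - τ) * (pk β (τ - s) * ENNReal.ofReal (Real.exp (1 * (τ - s)))) := by
    rw [← lintegral_const_mul' _ _ (by finiteness)]
    refine le_trans ?_ (setLIntegral_le_lintegral (Ioo s t) _)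
    apply setLIntegral_mono_ae' measurableSet_Ioo
    filter_upwards [h5'] with τ hτ hτm
    have e1 := hτ ⟨hτm.1, hτm.2.trans hmem.2⟩
    have e2 := pk_le_pk (α i) β (t - τ) (t - s) (by linarith [hτm.1]) (hα i).1
    have e3 : 1 ≤ ENNReal.ofReal (Real.exp (1 * (τ - s))) := by
      rw [← ENNReal.ofReal_one]
      apply ENNReal.ofReal_le_ofReal
      apply Real.one_le_exp
      linarith [hτm.1]
    calc _ ≤ (ENNReal.ofReal ((t - s) ^ (α i - β)) * pk β (t - τ)) *
          (K * (pk β (τ - s) * ENNReal.ofReal (Real.exp (1 * (τ - s))))) := by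
            gcongr
            refine e1.trans ?_
            gcongr
            exact le_mul_of_one_le_right (by simp) e3
      _ = _ := by ring
  have hc := conv_bound β 1 s t hβ hβ1 one_pos
  have hexp : ENNReal.ofReal (Real.exp (1 * (t - s))) ≤ ENNReal.ofReal (Real.exp (1 * L)) := by
    gcongr
  calc _ ≤ Λ * pk (α i) (t - s) + Λ * M * (K * ENNReal.ofReal ((t - s) ^ (α i - β)) *
        (ENNReal.ofReal (4 * ((1 / 1) ^ β * Real.Gamma β)) *
        (pk β (t - s) * ENNReal.ofReal (Real.exp (1 * L))))) := by
          gcongr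
          refine hI.trans ?_
          gcongr
          refine hc.trans ?_
          gcongr
    _ = Λ * pk (α i) (t - s) + Λ * M * (K * (ENNReal.ofReal ((t - s) ^ (α i - β)) * pk β (t - s)) *
        (ENNReal.ofReal (4 * ((1 / 1) ^ β * Real.Gamma β)) * ENNReal.ofReal (Real.exp (1 * L)))) := by
          ring
    _ = _ := by
      rw [pk_exp (α i) β _ hts]
      simp only [ENNReal.ofReal]
      push_cast
      ring

theorem statement10 (a : ℝ) (I : Set ℝ)
    (haI : a ∈ I) (hIsub : I ⊆ Set.Ici a) (hIint : (interior I).Nonempty)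
    (hIord : I.OrdConnected)
    (m : ℕ) (hm : 0 < m)
    (α : Fin m → Fin m → ℝ) (hα : ∀ i j, 0 < α i j ∧ α i j ≤ 1)
    (A : ℝ → Matrix (Fin m) (Fin m) ℝ)
    -- `A` is measurable and locally essentially bounded on `I`
    (hAmeas : ∀ i j, Measurable fun t => A t i j)
    (hAbdd : ∀ b ∈ I, ∃ M : ℝ,
      ∀ᵐ t ∂(volume.restrict (Set.Icc a b)), ∀ i j, |A t i j| ≤ M)
    (Z : ℝ → ℝ → Matrix (Fin m) (Fin m) ℝ)
    (hZmeas : ∀ i j, Measurable fun p : ℝ × ℝ => Z p.1 p.2 i j)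
    -- `Z` satisfies the left state-transition integral equation
    (hZeq : ∀ s ∈ I, ∀ᵐ t ∂(volume.restrict I), s < t → ∀ i j,
      Z t s i j = (t - s) ^ (α i j - 1) / Real.Gamma (α i j) * (if i = j then (1:ℝ) else 0)
        + (1 / Real.Gamma (α i j)) *
            ∫ τ in s..t, (t - τ) ^ (α i j - 1) * ∑ k, A τ i k * Z τ s k j)
    (hZint : ∀ s ∈ I, ∀ᵐ t ∂(volume.restrict I), s < t → ∀ i j,
      IntervalIntegrable (fun τ => (t - τ) ^ (α i j - 1) * ∑ k, A τ i k * Z τ s k j)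
        volume s t) :
    (∀ b ∈ I, a < b → ∃ Θ : ℝ, 0 ≤ Θ ∧
      ∀ s ∈ Set.Ico a b, ∀ᵐ t ∂(volume.restrict I), s < t → t ≤ b → ∀ i j,
        |Z t s i j| ≤ (t - s) ^ (α i j - 1) * Θ) ∧
    ∀ᵐ t ∂(volume.restrict I), a < t → ∀ i j,
      MeasureTheory.IntegrableOn (fun s => Z t s i j) (Set.Icc a t) := by
  have hImeas : MeasurableSet I := hIord.measurableSet
  have part1 : ∀ b ∈ I, a < b → ∃ Θ : ℝ, 0 ≤ Θ ∧
      ∀ s ∈ Set.Ico a b, ∀ᵐ t ∂(volume.restrict I), s < t → t ≤ b → ∀ i j,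
        |Z t s i j| ≤ (t - s) ^ (α i j - 1) * Θ := by
    intro b hb hab
    obtain ⟨M, hM⟩ := hAbdd b hb
    have : Nonempty (Fin m × Fin m) := ⟨(⟨0, hm⟩, ⟨0, hm⟩)⟩
    obtain ⟨p0, hp0⟩ := Finite.exists_min (fun p : Fin m × Fin m => α p.1 p.2)
    obtain ⟨p1, hp1⟩ := Finite.exists_max (fun p : Fin m × Fin m => 1 / Real.Gamma (α p.1 p.2))
    obtain ⟨Θ, hΘ⟩ := col m (α p0.1 p0.2) (hα _ _).1 (hα _ _).2 M.toNNReal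
      (1 / Real.Gamma (α p1.1 p1.2)).toNNReal (b - a)
    refine ⟨Θ, Θ.coe_nonneg, ?_⟩
    intro s hs
    have hsI : s ∈ I := hIord.out haI hb ⟨hs.1, hs.2.le⟩
    have hsub : ∀ t ∈ Ioo s b, t ∈ I := fun t ht =>
      hIord.out haI hb ⟨hs.1.trans ht.1.le, ht.2.le⟩
    have h1 := (ae_restrict_iff' hImeas).1 (hZeq s hsI)
    have h2 := (ae_restrict_iff' hImeas).1 (hZint s hsI)
    have h3 := (ae_restrict_iff' measurableSet_Icc).1 hM
    have key : ∀ j, ∀ᵐ t, t ∈ Ioo s b → ∀ i, ‖Z t s i j‖ₑ ≤ Θ * pk (α i j) (t - s) := by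
      intro j
      refine hΘ s b (by linarith [hs.1]) (fun i => α i j) (fun i => ⟨hp0 (i, j), (hα i j).2⟩)
        (fun i => (hp1 (i, j)).trans (Real.le_coe_toNNReal _)) A ?_ (fun i t => Z t s i j)
        (fun i => (hZmeas i j).comp (measurable_id.prodMk measurable_const)) hAmeas j ?_ ?_
      · filter_upwards [h3] with t ht hmem i k
        exact (ht ⟨hs.1.trans hmem.1.le, hmem.2.le⟩ i k).trans (Real.le_coe_toNNReal _)
      · filter_upwards [h1] with t ht hmem i
        exact ht (hsub t hmem) hmem.1 i j
      · filter_upwards [h2] with t ht hmem i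
        exact ht (hsub t hmem) hmem.1 i j
    apply ae_restrict_of_ae
    have hne : ∀ᵐ t : ℝ, t ≠ b := by
      simp [ae_iff]
    filter_upwards [ae_all_iff.2 key, hne] with t ht htb hst htle i j
    have h := ht j ⟨hst, lt_of_le_of_ne htle htb⟩ i
    have hts : 0 < t - s := sub_pos.2 hst
    have hpos := Real.rpow_nonneg hts.le (α i j - 1)
    simp only [pk, hts, if_true] at h
    rw [← ofReal_norm, ← ENNReal.ofReal_coe_nnreal, ← ENNReal.ofReal_mul Θ.coe_nonneg,
      ENNReal.ofReal_le_ofReal_iff (mul_nonneg Θ.coe_nonneg hpos), Real.norm_eq_abs] at h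
    rw [mul_comm]
    exact h
  refine ⟨part1, ?_⟩
  have hq : ∀ᵐ t ∂(volume.restrict I), ∀ q : ℚ, (q : ℝ) ∈ I → a < q → a < t → t ≤ (q : ℝ) → ∀ i j,
      MeasureTheory.IntegrableOn (fun s => Z t s i j) (Set.Icc a t) := by
    rw [ae_all_iff]
    intro q
    by_cases hqI : (q : ℝ) ∈ I
    swap
    · exact Filter.Eventually.of_forall fun t h => absurd h hqI
    by_cases haq : a < (q : ℝ)
    swap
    · exact Filter.Eventually.of_forall fun t _ h => absurd h haq
    obtain ⟨Θ, hΘ0, hΘ⟩ := part1 q hqI haq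
    have hms : MeasurableSet {x : ℝ × ℝ | x.1 < x.2 → x.2 ≤ q → ∀ i j,
        |Z x.2 x.1 i j| ≤ (x.2 - x.1) ^ (α i j - 1) * Θ} := by
      have m1 : MeasurableSet {x : ℝ × ℝ | x.1 < x.2} := measurableSet_lt measurable_fst measurable_snd
      have m2 : MeasurableSet {x : ℝ × ℝ | x.2 ≤ (q : ℝ)} := measurableSet_le measurable_snd measurable_const
      have m3 : MeasurableSet {x : ℝ × ℝ | ∀ i j,
        |Z x.2 x.1 i j| ≤ (x.2 - x.1) ^ (α i j - 1) * Θ} := by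
        have e : {x : ℝ × ℝ | ∀ i j, |Z x.2 x.1 i j| ≤ (x.2 - x.1) ^ (α i j - 1) * Θ} =
            ⋂ i, ⋂ j, {x : ℝ × ℝ | |Z x.2 x.1 i j| ≤ (x.2 - x.1) ^ (α i j - 1) * Θ} := by
          ext x; simp
        rw [e]
        refine MeasurableSet.iInter fun i => MeasurableSet.iInter fun j => ?_
        have mz : Measurable fun x : ℝ × ℝ => Z x.2 x.1 i j := (hZmeas i j).comp measurable_swap
        apply measurableSet_le
        · simpa only [Real.norm_eq_abs] using mz.norm
        · fun_prop
      exact m1.imp (m2.imp m3)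
    have hae : ∀ᵐ s ∂(volume.restrict (Ico a (q : ℝ))), ∀ᵐ t ∂(volume.restrict I),
        s < t → t ≤ (q : ℝ) → ∀ i j, |Z t s i j| ≤ (t - s) ^ (α i j - 1) * Θ := by
      filter_upwards [ae_restrict_mem measurableSet_Ico] with s hs using hΘ s hs
    rw [Measure.ae_ae_comm hms] at hae
    filter_upwards [hae] with t ht _ _ hat htq i j
    rw [integrableOn_Icc_iff_integrableOn_Ioo]
    have hg : IntegrableOn (fun s => (t - s) ^ (α i j - 1) * Θ) (Ioo a t) := by
      have h0 : IntervalIntegrable (fun x : ℝ => x ^ (α i j - 1)) volume (t - t) (t - a) :=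
        intervalIntegral.intervalIntegrable_rpow' (by linarith [(hα i j).1])
      have h1 := (h0.comp_sub_left t).symm
      simp only [sub_sub_cancel] at h1
      rw [intervalIntegrable_iff_integrableOn_Ioo_of_le hat.le] at h1
      exact h1.mul_const Θ
    refine Integrable.mono' hg ?_ ?_
    · exact ((hZmeas i j).comp (measurable_const.prodMk measurable_id)).aestronglyMeasurable
    · have h2 := ae_restrict_of_ae_restrict_of_subset
        (show Ioo a t ⊆ Ico a (q : ℝ) from fun s hs => ⟨hs.1.le, hs.2.trans_le htq⟩) ht
      filter_upwards [h2, ae_restrict_mem measurableSet_Ioo] with s hs hmem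
      exact hs hmem.2 htq i j
  have hmax : ∀ᵐ t ∂(volume.restrict I), ∃ t' ∈ I, t < t' := by
    rw [ae_restrict_iff' hImeas, ae_iff]
    apply Set.Subsingleton.measure_zero
    intro x hx y hy
    simp only [mem_ofPred_eq, Classical.not_imp, not_exists, not_and, not_lt] at hx hy
    exact le_antisymm (hy.2 x hx.1) (hx.2 y hy.1)
  filter_upwards [hq, hmax, ae_restrict_mem hImeas] with t ht ⟨t', ht', htt'⟩ htI hat i j
  obtain ⟨q, hq1, hq2⟩ := exists_rat_btwn htt'
  exact ht q (hIord.out htI ht' ⟨hq1.le, hq2.le⟩) (hat.trans hq1) hat hq1.le i j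
end
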